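/- arXiv:1905.07983 — 2 statements merged into one kernel-verified Lean document; each statement's English description precedes it below -/
import Mathlib

section
/- Let N ≥ 1, α, β > −1, and let z_1 < ... < z_N be the ordered zeros of the Jacobi polynomial P_N^{(α,β)}. Let S̃ be the N×N matrix with entries s̃_{j,j} = 4Σ_{l≠j}(1−z_j²)/(z_j−z_l)² + 2(α+1)(1+z_j)/(1−z_j) + 2(β+1)(1−z_j)/(1+z_j) and s̃_{i,j} = −4√((1−z_i²)(1−z_j²))/(z_i−z_j)² for i ≠ j. Then det(S̃) = 2^N · N! · (N+α+β+1)_N, where (x)_N = x(x+1)···(x+N−1) denotes the Pochhammer symbol. -/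
open MeasureTheory Filter Real Finset Topology

/-!
Let `T` be Jacobi's differential operator
`T q = (1 - x²) q'' + (β - α - (α + β + 2) x) q' + N (N + α + β + 1) q`. It sends `xⁿ` to
`(N - n) (N + n + α + β + 1) xⁿ` plus lower order terms, so its determinant on the polynomials of
degree less than `N` is `∏ n < N, (N - n) (N + n + α + β + 1) = N! (N + α + β + 1)_N`.

The Jacobi polynomial `P` satisfies `T P = 0`: `T` is symmetric for the Jacobi weight and `T P` has
degree less than `N`, so orthogonality gives `⟪T P, T P⟫ = ⟪P, T (T P)⟫ = 0`. Writing `P` as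
`(x - z_j) g_j` in this equation yields the values of `T g_j` at the zeros of `P`, that is, the
matrix of `T` in the basis of the `g_j`. Up to conjugation by a diagonal matrix, it is half of `S̃`.
-/

section Determinant

open Polynomial Matrix

lemma det_eq_of_diagonal_conj {R ι : Type*} [CommRing R] [IsDomain R] [Fintype ι] [DecidableEq ι]
    {A B : Matrix ι ι R} {d : ι → R} (hd : ∀ i, d i ≠ 0)
    (hAB : ∀ i j, d i * A i j = B i j * d j) : A.det = B.det := by
  have hmul : diagonal d * A = B * diagonal d := by
    ext i j
    rw [diagonal_mul, mul_diagonal, hAB]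
  have hdet : (diagonal d).det * A.det = (diagonal d).det * B.det := by
    rw [← det_mul, hmul, det_mul, mul_comm]
  refine mul_left_cancel₀ ?_ hdet
  rw [det_diagonal]
  exact prod_ne_zero_iff.2 fun i _ => hd i

variable {K : Type*} [Field K] {N : ℕ} {z : Fin N → K}

lemma sum_eval_map_lagrangeBasis_mul (hz : Function.Injective z) (T : K[X] →ₗ[K] K[X]) {q : K[X]}
    (hq : q.degree < N) (x : K) :
    ∑ j, (T (Lagrange.basis univ z j)).eval x * q.eval (z j) = (T q).eval x := by
  have hinterp := Lagrange.eq_interpolate (s := univ) hz.injOn (by simpa using hq)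
  conv_rhs => rw [hinterp, Lagrange.interpolate_apply]
  simp only [← smul_eq_C_mul, map_sum, map_smul, eval_finsetSum, eval_smul, smul_eq_mul]
  exact sum_congr rfl fun j _ => mul_comm _ _

lemma det_eval_map_lagrangeBasis (hz : Function.Injective z) {T : K[X] →ₗ[K] K[X]}
    (hT : ∀ n, (T (X ^ n)).natDegree ≤ n) :
    (of fun i j => (T (Lagrange.basis univ z j)).eval (z i)).det =
      ∏ n ∈ range N, (T (X ^ n)).coeff n := by
  set U : Matrix (Fin N) (Fin N) K := of fun m n => (T (X ^ (n : ℕ))).coeff m with hU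
  have hconj : (of fun i j => (T (Lagrange.basis univ z j)).eval (z i)) * vandermonde z =
      vandermonde z * U := by
    rw [hU, ← eval_matrixOfPolynomials_eq_vandermonde_mul_matrixOfPolynomials z
      (fun n => T (X ^ (n : ℕ))) fun n => hT n]
    ext i n
    have hn : (X ^ (n : ℕ) : K[X]).degree < N := by simp
    simpa [mul_apply, vandermonde_apply] using sum_eval_map_lagrangeBasis_mul hz T hn (z i)
  have hUdet : U.det = ∏ n ∈ range N, (T (X ^ n)).coeff n := by
    rw [det_of_isUpperTriangular, ← Fin.prod_univ_eq_prod_range]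
    · rfl
    · exact fun m n hnm => coeff_eq_zero_of_natDegree_lt ((hT n).trans_lt hnm)
  have hdet := congrArg det hconj
  rw [det_mul, det_mul, mul_comm] at hdet
  rw [← hUdet, mul_left_cancel₀ (det_vandermonde_ne_zero_iff.2 hz) hdet]

end Determinant

section Nodal

open Polynomial Lagrange

variable {K ι : Type*} [Field K] {s : Finset ι} {v : ι → K} {x : K}

lemma eval_nodal_erase_eq_mul_one_div [DecidableEq ι] {i : ι} (hi : i ∈ s) (hx : x ≠ v i) :
    (nodal (s.erase i) v).eval x = (nodal s v).eval x * (1 / (x - v i)) := by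
  have : x - v i ≠ 0 := sub_ne_zero.2 hx
  rw [nodal_eq_mul_nodal_erase hi]
  simp only [eval_mul, eval_sub, eval_X, eval_C]
  field_simp

lemma eval_derivative_nodal_eq_mul_sum (hx : ∀ i ∈ s, x ≠ v i) :
    (derivative (nodal s v)).eval x = (nodal s v).eval x * ∑ i ∈ s, 1 / (x - v i) := by
  classical
  rw [derivative_nodal, eval_finsetSum, mul_sum]
  exact sum_congr rfl fun i hi => eval_nodal_erase_eq_mul_one_div hi (hx i hi)

lemma eval_derivative_derivative_nodal_eq_mul_sum (hx : ∀ i ∈ s, x ≠ v i) :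
    (derivative (derivative (nodal s v))).eval x =
      (nodal s v).eval x * ((∑ i ∈ s, 1 / (x - v i)) ^ 2 - ∑ i ∈ s, 1 / (x - v i) ^ 2) := by
  classical
  have hterm : ∀ i ∈ s, (derivative (nodal (s.erase i) v)).eval x =
      (nodal s v).eval x * (1 / (x - v i) * (∑ l ∈ s, 1 / (x - v l)) - 1 / (x - v i) ^ 2) := by
    intro i hi
    rw [eval_derivative_nodal_eq_mul_sum fun l hl => hx l (mem_of_mem_erase hl),
      eval_nodal_erase_eq_mul_one_div hi (hx i hi), sum_erase_eq_sub hi, ← one_div_pow]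
    ring
  rw [derivative_nodal, derivative_sum, eval_finsetSum, sum_congr rfl hterm, ← mul_sum,
    sum_sub_distrib, ← sum_mul, sq]

lemma eq_C_leadingCoeff_mul_nodal {p : K[X]} (hv : Set.InjOn v s) (hp : p.degree = #s)
    (hroot : ∀ i ∈ s, p.eval (v i) = 0) : p = C p.leadingCoeff * nodal s v := by
  have hp0 : p ≠ 0 := by rintro rfl; simp at hp
  refine eq_of_degree_le_of_eval_index_eq s hv hp.le ?_ ?_ fun i hi => ?_
  · rw [degree_C_mul (leadingCoeff_ne_zero.2 hp0), degree_nodal, hp]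
  · rw [leadingCoeff_mul, leadingCoeff_C, nodal_monic.leadingCoeff, mul_one]
  · rw [eval_mul, eval_nodal_at_node hi, mul_zero, hroot i hi]

end Nodal

section JacobiOperator

open Polynomial

variable {R : Type*} [CommRing R]

/-- Jacobi's differential operator
`q ↦ (1 - x²) q'' + (β - α - (α + β + 2) x) q' + n (n + α + β + 1) q`, whose kernel contains the
Jacobi polynomial of degree `n` with parameters `α`, `β`. The degree `n` is taken in `R`. -/
noncomputable def jacobiOperator (n α β : R) : R[X] →ₗ[R] R[X] :=
  LinearMap.mulLeft R (1 - X ^ 2) ∘ₗ derivative ∘ₗ derivative +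
    LinearMap.mulLeft R (C (β - α) - C (α + β + 2) * X) ∘ₗ derivative +
    (n * (n + α + β + 1)) • LinearMap.id

lemma jacobiOperator_apply (n α β : R) (q : R[X]) :
    jacobiOperator n α β q = (1 - X ^ 2) * derivative (derivative q) +
      (C (β - α) - C (α + β + 2) * X) * derivative q + C (n * (n + α + β + 1)) * q := by
  simp [jacobiOperator, smul_eq_C_mul]

lemma eval_jacobiOperator (n α β : R) (q : R[X]) (x : R) :
    (jacobiOperator n α β q).eval x = (1 - x ^ 2) * (derivative (derivative q)).eval x +
      (β - α - (α + β + 2) * x) * (derivative q).eval x + n * (n + α + β + 1) * q.eval x := by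
  simp [jacobiOperator_apply]

lemma coeff_jacobiOperator (n α β : R) (q : R[X]) (m : ℕ) :
    (jacobiOperator n α β q).coeff m = (m + 2) * (m + 1) * q.coeff (m + 2) +
      (β - α) * (m + 1) * q.coeff (m + 1) + (n - m) * (n + m + α + β + 1) * q.coeff m := by
  have hX : (X * derivative q).coeff m = m * q.coeff m := by
    cases m <;> simp [coeff_derivative, mul_comm]
  have hX2 : (X ^ 2 * derivative (derivative q)).coeff m = m * (m - 1) * q.coeff m := by
    rcases m with _ | _ | m
    · simp
    · simp [coeff_X_pow_mul']
    · rw [coeff_X_pow_mul, coeff_derivative, coeff_derivative]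
      push_cast
      ring
  rw [jacobiOperator_apply, sub_mul, sub_mul, one_mul, mul_assoc]
  simp only [coeff_add, coeff_sub, coeff_C_mul, hX, hX2, coeff_derivative]
  push_cast
  ring

lemma degree_jacobiOperator_le (n α β : R) (q : R[X]) :
    (jacobiOperator n α β q).degree ≤ q.degree := by
  refine degree_le_iff_coeff_zero _ _ |>.2 fun m hm => ?_
  have hq : ∀ k ≥ m, q.coeff k = 0 := fun k hk =>
    coeff_eq_zero_of_degree_lt (hm.trans_le (by exact_mod_cast hk))
  simp [coeff_jacobiOperator, hq]

lemma natDegree_jacobiOperator_X_pow_le (n α β : R) (m : ℕ) :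
    (jacobiOperator n α β (X ^ m)).natDegree ≤ m :=
  natDegree_le_of_degree_le ((degree_jacobiOperator_le n α β _).trans (degree_X_pow_le m))

lemma coeff_jacobiOperator_X_pow_self (n α β : R) (m : ℕ) :
    (jacobiOperator n α β (X ^ m)).coeff m = (n - m) * (n + m + α + β + 1) := by
  simp [coeff_jacobiOperator, coeff_X_pow]

lemma degree_jacobiOperator_lt {N : ℕ} (α β : R) {q : R[X]} (hq : q.natDegree ≤ N) :
    (jacobiOperator (N : R) α β q).degree < N := by
  refine degree_lt_iff_coeff_zero _ _ |>.2 fun m hm => ?_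
  have hcoeff : ∀ k > N, q.coeff k = 0 := fun k hk => coeff_eq_zero_of_natDegree_lt (by omega)
  rw [coeff_jacobiOperator, hcoeff (m + 1) (by omega), hcoeff (m + 2) (by omega)]
  rcases hm.eq_or_lt with rfl | hlt
  · ring
  · rw [hcoeff m hlt]
    ring

lemma jacobiOperator_X_sub_C_mul (n α β a : R) (q : R[X]) :
    jacobiOperator n α β ((X - C a) * q) = (X - C a) * jacobiOperator n α β q +
      (2 * (1 - X ^ 2) * derivative q + (C (β - α) - C (α + β + 2) * X) * q) := by
  simp only [jacobiOperator_apply, derivative_mul, derivative_add, derivative_sub, derivative_X,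
    derivative_C, sub_zero, one_mul]
  ring

variable {n α β a : R} {q : R[X]}

lemma X_sub_C_mul_jacobiOperator (h : jacobiOperator n α β ((X - C a) * q) = 0) :
    (X - C a) * jacobiOperator n α β q =
      -(2 * (1 - X ^ 2) * derivative q + (C (β - α) - C (α + β + 2) * X) * q) :=
  eq_neg_of_add_eq_zero_left (jacobiOperator_X_sub_C_mul n α β a q ▸ h)

lemma sub_mul_eval_jacobiOperator (h : jacobiOperator n α β ((X - C a) * q) = 0) (x : R) :
    (x - a) * (jacobiOperator n α β q).eval x =
      -(2 * (1 - x ^ 2) * (derivative q).eval x + (β - α - (α + β + 2) * x) * q.eval x) := by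
  simpa using congrArg (eval x) (X_sub_C_mul_jacobiOperator h)

lemma eval_jacobiOperator_self (h : jacobiOperator n α β ((X - C a) * q) = 0) :
    (jacobiOperator n α β q).eval a = -(2 * (1 - a ^ 2) * (derivative (derivative q)).eval a) +
      4 * a * (derivative q).eval a - (β - α - (α + β + 2) * a) * (derivative q).eval a +
      (α + β + 2) * q.eval a := by
  have hderiv := congrArg (fun p => (derivative p).eval a) (X_sub_C_mul_jacobiOperator h)
  simp only [derivative_mul, derivative_sub, derivative_add, derivative_neg, derivative_X,
    derivative_C, derivative_one, derivative_ofNat, derivative_X_sq, eval_add, eval_sub, eval_mul,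
    eval_neg, eval_pow, eval_X, eval_C, eval_one, eval_zero, eval_ofNat, sub_self] at hderiv
  linear_combination hderiv

end JacobiOperator

section JacobiMatrix

open Polynomial Lagrange

variable {K ι : Type*} [Field K] [Fintype ι] [DecidableEq ι]

/-- The matrix of `jacobiOperator n α β` in the basis of the polynomials `nodal (univ.erase j) z`,
when `z` lists the zeros of a solution of Jacobi's equation. Unlike its symmetric version
`trigJacobiMatrix`, it involves no square roots and is defined over any field. -/
def jacobiMatrix (α β : K) (z : ι → K) : Matrix ι ι K :=
  Matrix.of fun i j =>
    if i = j then
      2 * (∑ l ∈ univ.erase j, (1 - z j ^ 2) / (z j - z l) ^ 2) +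
        (α + 1) * ((1 + z j) / (1 - z j)) + (β + 1) * ((1 - z j) / (1 + z j))
    else -2 * (1 - z i ^ 2) / (z i - z j) ^ 2

variable {n α β : K} {z : ι → K}

lemma eval_nodal_erase_ne_zero (hz : Function.Injective z) (i : ι) :
    (nodal (univ.erase i) z).eval (z i) ≠ 0 :=
  eval_nodal_not_at_node fun _ hl => hz.ne (ne_of_mem_erase hl).symm

lemma jacobiOperator_X_sub_C_mul_nodal_erase (hode : jacobiOperator n α β (nodal univ z) = 0)
    (j : ι) : jacobiOperator n α β ((X - C (z j)) * nodal (univ.erase j) z) = 0 := by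
  rwa [← nodal_eq_mul_nodal_erase (mem_univ j)]

lemma eval_nodal_erase_self_eq_sub_mul {i j : ι} (hij : i ≠ j) :
    (nodal (univ.erase i) z).eval (z i) =
      (z i - z j) * (derivative (nodal (univ.erase j) z)).eval (z i) := by
  rw [← eval_nodal_derivative_eval_node_eq (mem_univ i), nodal_eq_mul_nodal_erase (mem_univ j)]
  simp [eval_nodal_at_node (mem_erase.2 ⟨hij, mem_univ i⟩)]

lemma eval_jacobiOperator_nodal_erase_of_ne (hz : Function.Injective z)
    (hode : jacobiOperator n α β (nodal univ z) = 0) {i j : ι} (hij : i ≠ j) :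
    (jacobiOperator n α β (nodal (univ.erase j) z)).eval (z i) =
      jacobiMatrix α β z i j * (nodal (univ.erase i) z).eval (z i) := by
  have hne : z i - z j ≠ 0 := sub_ne_zero.2 (hz.ne hij)
  have hfirst := sub_mul_eval_jacobiOperator (jacobiOperator_X_sub_C_mul_nodal_erase hode j) (z i)
  rw [eval_nodal_at_node (mem_erase.2 ⟨hij, mem_univ i⟩)] at hfirst
  rw [eval_nodal_erase_self_eq_sub_mul hij, jacobiMatrix, Matrix.of_apply, if_neg hij]
  field_simp
  linear_combination hfirst

-- Stieltjes' electrostatic equilibrium condition.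
lemma two_mul_one_sub_sq_mul_sum_one_div_sub (hz : Function.Injective z)
    (hode : jacobiOperator n α β (nodal univ z) = 0) (j : ι) :
    2 * (1 - z j ^ 2) * ∑ l ∈ univ.erase j, 1 / (z j - z l) = α - β + (α + β + 2) * z j := by
  have hfirst := sub_mul_eval_jacobiOperator (jacobiOperator_X_sub_C_mul_nodal_erase hode j) (z j)
  rw [eval_derivative_nodal_eq_mul_sum fun l hl => hz.ne (ne_of_mem_erase hl).symm] at hfirst
  apply mul_left_cancel₀ (eval_nodal_erase_ne_zero hz j)
  linear_combination hfirst

lemma jacobiMatrix_self_of_jacobiOperator_nodal_eq_zero (hz : Function.Injective z) {j : ι}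
    (hsub : 1 - z j ≠ 0) (hadd : 1 + z j ≠ 0)
    (hode : jacobiOperator n α β (nodal univ z) = 0) :
    jacobiMatrix α β z j j = 2 * (1 - z j ^ 2) * ∑ l ∈ univ.erase j, 1 / (z j - z l) ^ 2 +
      4 * z j * ∑ l ∈ univ.erase j, 1 / (z j - z l) + (α + β + 2) := by
  have hequilibrium := two_mul_one_sub_sq_mul_sum_one_div_sub hz hode j
  have hpoles : (α + 1) * ((1 + z j) / (1 - z j)) + (β + 1) * ((1 - z j) / (1 + z j)) =
      α + β + 2 + 4 * z j * ∑ l ∈ univ.erase j, 1 / (z j - z l) := by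
    generalize ∑ l ∈ univ.erase j, 1 / (z j - z l) = A at hequilibrium ⊢
    field_simp
    linear_combination -2 * z j * hequilibrium
  simp only [jacobiMatrix, Matrix.of_apply, if_true, div_eq_mul_one_div (1 - z j ^ 2), ← mul_sum]
  linear_combination hpoles

lemma eval_jacobiOperator_nodal_erase_self (hz : Function.Injective z) {j : ι} (hsub : 1 - z j ≠ 0)
    (hadd : 1 + z j ≠ 0) (hode : jacobiOperator n α β (nodal univ z) = 0) :
    (jacobiOperator n α β (nodal (univ.erase j) z)).eval (z j) =
      jacobiMatrix α β z j j * (nodal (univ.erase j) z).eval (z j) := by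
  have hnode : ∀ l ∈ univ.erase j, z j ≠ z l := fun l hl => hz.ne (ne_of_mem_erase hl).symm
  rw [eval_jacobiOperator_self (jacobiOperator_X_sub_C_mul_nodal_erase hode j),
    eval_derivative_derivative_nodal_eq_mul_sum hnode, eval_derivative_nodal_eq_mul_sum hnode,
    jacobiMatrix_self_of_jacobiOperator_nodal_eq_zero hz hsub hadd hode]
  linear_combination -(nodal (univ.erase j) z).eval (z j) *
    (∑ l ∈ univ.erase j, 1 / (z j - z l)) * two_mul_one_sub_sq_mul_sum_one_div_sub hz hode j

lemma eval_jacobiOperator_nodal_erase (hz : Function.Injective z) {j : ι} (hsub : 1 - z j ≠ 0)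
    (hadd : 1 + z j ≠ 0) (hode : jacobiOperator n α β (nodal univ z) = 0) (i : ι) :
    (jacobiOperator n α β (nodal (univ.erase j) z)).eval (z i) =
      jacobiMatrix α β z i j * (nodal (univ.erase i) z).eval (z i) := by
  rcases eq_or_ne i j with rfl | hij
  · exact eval_jacobiOperator_nodal_erase_self hz hsub hadd hode
  · exact eval_jacobiOperator_nodal_erase_of_ne hz hode hij

lemma lagrangeBasis_eq_nodalWeight_smul_nodal_erase (z : ι → K) (j : ι) :
    Lagrange.basis univ z j = nodalWeight univ z j • nodal (univ.erase j) z := by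
  rw [basis_eq_prod_sub_inv_mul_nodal_div (mem_univ j), nodal_erase_eq_nodal_div (mem_univ j),
    smul_eq_C_mul]

lemma nodalWeight_mul_eval_jacobiOperator_lagrangeBasis (hz : Function.Injective z) {j : ι}
    (hsub : 1 - z j ≠ 0) (hadd : 1 + z j ≠ 0)
    (hode : jacobiOperator n α β (nodal univ z) = 0) (i : ι) :
    nodalWeight univ z i * (jacobiOperator n α β (Lagrange.basis univ z j)).eval (z i) =
      jacobiMatrix α β z i j * nodalWeight univ z j := by
  have hnodal := eval_nodal_erase_ne_zero hz i
  rw [lagrangeBasis_eq_nodalWeight_smul_nodal_erase, map_smul, eval_smul, smul_eq_mul,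
    eval_jacobiOperator_nodal_erase hz hsub hadd hode, nodalWeight_eq_eval_nodal_erase_inv (i := i)]
  field_simp

theorem det_jacobiMatrix {N : ℕ} {z : Fin N → K} (hz : Function.Injective z)
    (hsub : ∀ i, 1 - z i ≠ 0) (hadd : ∀ i, 1 + z i ≠ 0)
    (hode : jacobiOperator (N : K) α β (nodal univ z) = 0) :
    (jacobiMatrix α β z).det = N.factorial * ∏ m ∈ range N, (N + α + β + 1 + m) := by
  have hfactorial : ∏ m ∈ range N, ((N : K) - m) = N.factorial := by
    rw [prod_range_natCast_sub, ← Nat.descFactorial_eq_prod_range, Nat.descFactorial_self]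
  calc (jacobiMatrix α β z).det
    _ = (Matrix.of fun i j =>
          (jacobiOperator (N : K) α β (Lagrange.basis univ z j)).eval (z i)).det :=
      (det_eq_of_diagonal_conj (fun i => nodalWeight_ne_zero hz.injOn (mem_univ i)) fun i j =>
        nodalWeight_mul_eval_jacobiOperator_lagrangeBasis hz (hsub j) (hadd j) hode i).symm
    _ = ∏ m ∈ range N, ((N : K) - m) * (N + m + α + β + 1) := by
      simp only [det_eval_map_lagrangeBasis hz (natDegree_jacobiOperator_X_pow_le _ _ _),
        coeff_jacobiOperator_X_pow_self]
    _ = N.factorial * ∏ m ∈ range N, (N + α + β + 1 + m) := by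
      rw [prod_mul_distrib, hfactorial]
      exact congrArg _ (prod_congr rfl fun m _ => by ring)

end JacobiMatrix

section Orthogonality

open Polynomial

lemma eq_zero_of_setIntegral_sq_mul_eq_zero {a b : ℝ} (hab : a < b) {w : ℝ → ℝ}
    (hw : ∀ x ∈ Set.Ioo a b, 0 < w x) {p : ℝ[X]}
    (hint : IntegrableOn (fun x => p.eval x ^ 2 * w x) (Set.Ioo a b))
    (h0 : ∫ x in Set.Ioo a b, p.eval x ^ 2 * w x = 0) : p = 0 := by
  have hnonneg : 0 ≤ᵐ[volume.restrict (Set.Ioo a b)] fun x => p.eval x ^ 2 * w x :=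
    ae_restrict_of_forall_mem measurableSet_Ioo fun x hx => mul_nonneg (sq_nonneg _) (hw x hx).le
  have hae : (fun x => p.eval x) =ᵐ[volume.restrict (Set.Ioo a b)] fun _ => 0 := by
    filter_upwards [(setIntegral_eq_zero_iff_of_nonneg_ae hnonneg hint).1 h0,
      ae_restrict_mem measurableSet_Ioo] with x hx hmem
    simpa [(hw x hmem).ne'] using hx
  have hzero : Set.EqOn (fun x => p.eval x) (fun _ => 0) (Set.Ioo a b) :=
    Measure.eqOn_open_of_ae_eq hae isOpen_Ioo p.continuousOn continuousOn_const
  exact p.eq_zero_of_infinite_isRoot ((Set.Ioo_infinite hab).mono hzero)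

/-- The weight `(1 - x) ^ α * (1 + x) ^ β` on `(-1, 1)` of the Jacobi polynomials. -/
noncomputable def jacobiWeight (α β x : ℝ) : ℝ := (1 - x) ^ α * (1 + x) ^ β

variable {α β : ℝ}

lemma jacobiWeight_pos {x : ℝ} (hx : x ∈ Set.Ioo (-1) 1) : 0 < jacobiWeight α β x :=
  mul_pos (rpow_pos_of_pos (by linarith [hx.2]) _) (rpow_pos_of_pos (by linarith [hx.1]) _)

lemma jacobiWeight_add_one {x : ℝ} (hx : x ∈ Set.Ioo (-1) 1) :
    jacobiWeight (α + 1) (β + 1) x = (1 - x ^ 2) * jacobiWeight α β x := by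
  rw [jacobiWeight, jacobiWeight, rpow_add_one (by linarith [hx.2]),
    rpow_add_one (by linarith [hx.1])]
  ring

lemma hasDerivAt_jacobiWeight_add_one {x : ℝ} (hx : x ∈ Set.Ioo (-1) 1) :
    HasDerivAt (jacobiWeight (α + 1) (β + 1))
      ((β - α - (α + β + 2) * x) * jacobiWeight α β x) x := by
  have hleft : 1 - x ≠ 0 := by linarith [hx.2]
  have hright : 1 + x ≠ 0 := by linarith [hx.1]
  have hd₁ : HasDerivAt (fun x : ℝ => (1 - x) ^ (α + 1)) (-1 * (α + 1) * (1 - x) ^ α) x := by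
    simpa using ((hasDerivAt_id x).const_sub 1).rpow_const (p := α + 1) (Or.inl hleft)
  have hd₂ : HasDerivAt (fun x : ℝ => (1 + x) ^ (β + 1)) (1 * (β + 1) * (1 + x) ^ β) x := by
    simpa using ((hasDerivAt_id x).const_add 1).rpow_const (p := β + 1) (Or.inl hright)
  refine (hd₁.mul hd₂).congr_deriv ?_
  rw [jacobiWeight, rpow_add_one hleft, rpow_add_one hright]
  ring

lemma continuous_jacobiWeight (hα : 0 ≤ α) (hβ : 0 ≤ β) : Continuous (jacobiWeight α β) :=
  ((continuous_const.sub continuous_id).rpow_const fun _ => Or.inr hα).mul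
    ((continuous_const.add continuous_id).rpow_const fun _ => Or.inr hβ)

lemma intervalIntegrable_jacobiWeight (hα : -1 < α) (hβ : -1 < β) :
    IntervalIntegrable (jacobiWeight α β) volume (-1) 1 := by
  have hleft : IntervalIntegrable (fun x : ℝ => (1 + x) ^ β) volume (-1) 0 := by
    simpa using (intervalIntegral.intervalIntegrable_rpow' (a := 0) (b := 1) hβ).comp_add_left 1
  have hright : IntervalIntegrable (fun x : ℝ => (1 - x) ^ α) volume 0 1 := by
    simpa using (intervalIntegral.intervalIntegrable_rpow' (a := 1) (b := 0) hα).comp_sub_left 1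
  refine (hleft.continuousOn_mul ?_).trans (hright.mul_continuousOn ?_) <;>
  · refine ContinuousOn.rpow_const (by fun_prop) fun x hx => Or.inl ?_
    rw [Set.uIcc_of_le (by norm_num)] at hx
    linarith [hx.1, hx.2]

lemma intervalIntegrable_eval_mul_jacobiWeight (hα : -1 < α) (hβ : -1 < β) (p : ℝ[X]) :
    IntervalIntegrable (fun x => p.eval x * jacobiWeight α β x) volume (-1) 1 :=
  (intervalIntegrable_jacobiWeight hα hβ).continuousOn_mul p.continuousOn

lemma integrableOn_eval_mul_jacobiWeight (hα : -1 < α) (hβ : -1 < β) (p : ℝ[X]) :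
    IntegrableOn (fun x => p.eval x * jacobiWeight α β x) (Set.Ioo (-1) 1) :=
  (intervalIntegrable_iff_integrableOn_Ioo_of_le (by norm_num)).1
    (intervalIntegrable_eval_mul_jacobiWeight hα hβ p)

lemma hasDerivAt_wronskian_mul_jacobiWeight (n : ℝ) (p q : ℝ[X]) {x : ℝ}
    (hx : x ∈ Set.Ioo (-1) 1) :
    HasDerivAt (fun x => (wronskian q p).eval x * jacobiWeight (α + 1) (β + 1) x)
      ((jacobiOperator n α β p * q - p * jacobiOperator n α β q).eval x * jacobiWeight α β x)
      x := by
  refine (((wronskian q p).hasDerivAt x).mul (hasDerivAt_jacobiWeight_add_one hx)).congr_deriv ?_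
  rw [jacobiWeight_add_one hx]
  simp only [wronskian, derivative_sub, derivative_mul, eval_sub, eval_add, eval_mul,
    eval_jacobiOperator]
  ring

lemma setIntegral_jacobiOperator_mul_comm (hα : -1 < α) (hβ : -1 < β) (n : ℝ) (p q : ℝ[X]) :
    ∫ x in Set.Ioo (-1) 1, (jacobiOperator n α β p * q).eval x * jacobiWeight α β x =
      ∫ x in Set.Ioo (-1) 1, (p * jacobiOperator n α β q).eval x * jacobiWeight α β x := by
  have hend : ∀ x ∈ ({-1, 1} : Set ℝ), jacobiWeight (α + 1) (β + 1) x = 0 := by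
    rintro x (rfl | rfl) <;>
    simp [jacobiWeight, zero_rpow (by linarith : α + 1 ≠ 0), zero_rpow (by linarith : β + 1 ≠ 0)]
  have hcont : Continuous fun x => (wronskian q p).eval x * jacobiWeight (α + 1) (β + 1) x :=
    (wronskian q p).continuous.mul (continuous_jacobiWeight (by linarith) (by linarith))
  have hftc := intervalIntegral.integral_eq_sub_of_hasDerivAt_of_le (by norm_num)
    hcont.continuousOn (fun x hx => hasDerivAt_wronskian_mul_jacobiWeight n p q hx)
    (intervalIntegrable_eval_mul_jacobiWeight hα hβ _)
  rw [hend 1 (by simp), hend (-1) (by simp), mul_zero, mul_zero, sub_zero,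
    intervalIntegral.integral_of_le (by norm_num), integral_Ioc_eq_integral_Ioo] at hftc
  rw [← sub_eq_zero, ← integral_sub (integrableOn_eval_mul_jacobiWeight hα hβ _)
    (integrableOn_eval_mul_jacobiWeight hα hβ _), ← hftc]
  simp only [eval_sub, sub_mul]

theorem jacobiOperator_eq_zero_of_orthogonal (hα : -1 < α) (hβ : -1 < β) {N : ℕ} {P : ℝ[X]}
    (hdeg : P.natDegree ≤ N)
    (horth : ∀ Q : ℝ[X], Q.natDegree < N →
      ∫ x in Set.Ioo (-1) 1, (P * Q).eval x * jacobiWeight α β x = 0) :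
    jacobiOperator (N : ℝ) α β P = 0 := by
  set T := jacobiOperator (N : ℝ) α β
  have hTT : (T (T P)).degree < N :=
    (degree_jacobiOperator_le _ _ _ _).trans_lt (degree_jacobiOperator_lt α β hdeg)
  have hsq : ∀ x, (T P).eval x ^ 2 = (T P * T P).eval x := fun x => by rw [eval_mul, sq]
  refine eq_zero_of_setIntegral_sq_mul_eq_zero (by norm_num)
    (fun x hx => jacobiWeight_pos (α := α) (β := β) hx) ?_ ?_
  · simpa only [hsq] using integrableOn_eval_mul_jacobiWeight hα hβ (T P * T P)
  · calc ∫ x in Set.Ioo (-1) 1, (T P).eval x ^ 2 * jacobiWeight α β x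
      _ = ∫ x in Set.Ioo (-1) 1, (T P * T P).eval x * jacobiWeight α β x := by simp only [hsq]
      _ = ∫ x in Set.Ioo (-1) 1, (P * T (T P)).eval x * jacobiWeight α β x :=
        setIntegral_jacobiOperator_mul_comm hα hβ _ _ _
      _ = 0 := by
        rcases eq_or_ne (T (T P)) 0 with hzero | hne
        · simp [hzero]
        · exact horth _ ((natDegree_lt_iff_degree_lt hne).2 hTT)

end Orthogonality

section TrigJacobiMatrix

open Polynomial

/-- The matrix `S̃` attached to the zeros `z` of a Jacobi polynomial: twice `jacobiMatrix α β z`,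
made symmetric by conjugation with the diagonal matrix of the `√(1 - z i ^ 2)`. -/
noncomputable def trigJacobiMatrix {ι : Type*} [Fintype ι] [DecidableEq ι] (α β : ℝ) (z : ι → ℝ) :
    Matrix ι ι ℝ :=
  Matrix.of fun i j =>
    if i = j then
      4 * (∑ l ∈ univ.erase j, (1 - z j ^ 2) / (z j - z l) ^ 2) +
        2 * (α + 1) * ((1 + z j) / (1 - z j)) + 2 * (β + 1) * ((1 - z j) / (1 + z j))
    else -4 * √((1 - z i ^ 2) * (1 - z j ^ 2)) / (z i - z j) ^ 2

lemma det_trigJacobiMatrix_eq {ι : Type*} [Fintype ι] [DecidableEq ι] (α β : ℝ) {z : ι → ℝ}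
    (hz : ∀ i, z i ∈ Set.Ioo (-1) 1) :
    (trigJacobiMatrix α β z).det = 2 ^ Fintype.card ι * (jacobiMatrix α β z).det := by
  have hpos : ∀ i, 0 < 1 - z i ^ 2 := fun i => by nlinarith [(hz i).1, (hz i).2]
  rw [← Matrix.det_smul]
  refine det_eq_of_diagonal_conj (d := fun i => √(1 - z i ^ 2))
    (fun i => (sqrt_pos.2 (hpos i)).ne') fun i j => ?_
  simp only [trigJacobiMatrix, jacobiMatrix, Matrix.smul_apply, Matrix.of_apply, smul_eq_mul]
  split_ifs with hij
  · subst hij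
    ring
  · rw [sqrt_mul (hpos i).le]
    linear_combination -4 * √(1 - z j ^ 2) / (z i - z j) ^ 2 * mul_self_sqrt (hpos i).le

theorem trig_jacobi_matrix_det_general {N : ℕ} {α β : ℝ} {P : ℝ[X]} (hPdeg : P.degree = N)
    (hPode : jacobiOperator (N : ℝ) α β P = 0) {z : Fin N → ℝ} (hz : Function.Injective z)
    (hzroot : ∀ i, P.eval (z i) = 0) (hzmem : ∀ i, z i ∈ Set.Ioo (-1) 1) :
    (trigJacobiMatrix α β z).det =
      2 ^ N * (N.factorial : ℝ) * ∏ j ∈ range N, ((N : ℝ) + α + β + 1 + j) := by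
  have hP0 : P ≠ 0 := by rintro rfl; simp at hPdeg
  have hnodal : jacobiOperator (N : ℝ) α β (Lagrange.nodal univ z) = 0 := by
    rw [eq_C_leadingCoeff_mul_nodal (s := univ) hz.injOn (by simpa using hPdeg) fun i _ => hzroot i,
      ← smul_eq_C_mul, map_smul, smul_eq_zero, leadingCoeff_eq_zero] at hPode
    exact hPode.resolve_left hP0
  rw [det_trigJacobiMatrix_eq α β hzmem, Fintype.card_fin, mul_assoc,
    det_jacobiMatrix hz (fun i => by linarith [(hzmem i).2]) (fun i => by linarith [(hzmem i).1])
      hnodal]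

end TrigJacobiMatrix

theorem trig_jacobi_matrix_det
    (N : ℕ) (hN : 1 ≤ N) (α β : ℝ) (hα : -1 < α) (hβ : -1 < β)
    (P : Polynomial ℝ) (hPdeg : P.natDegree = N)
    (hPorth : ∀ Q : Polynomial ℝ, Q.natDegree < N →
      ∫ x in Set.Ioo (-1 : ℝ) 1,
        P.eval x * Q.eval x * (1 - x) ^ α * (1 + x) ^ β = 0)
    (hPone : P.eval 1 = (∏ j ∈ Finset.range N, (α + 1 + j)) / (N.factorial : ℝ))
    (z : Fin N → ℝ) (hzmono : StrictMono z)
    (hzroot : ∀ i, P.eval (z i) = 0)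
    (hzmem : ∀ i, z i ∈ Set.Ioo (-1 : ℝ) 1)
    (S : Matrix (Fin N) (Fin N) ℝ)
    (hS : S = Matrix.of fun i j =>
      if i = j then
        4 * (∑ l ∈ Finset.univ.erase j, (1 - z j ^ 2) / (z j - z l) ^ 2) +
          2 * (α + 1) * ((1 + z j) / (1 - z j)) + 2 * (β + 1) * ((1 - z j) / (1 + z j))
      else -4 * Real.sqrt ((1 - z i ^ 2) * (1 - z j ^ 2)) / (z i - z j) ^ 2)
    : S.det = 2 ^ N * (N.factorial : ℝ) * ∏ j ∈ Finset.range N, ((N : ℝ) + α + β + 1 + j) := by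
  have hPode := jacobiOperator_eq_zero_of_orthogonal hα hβ hPdeg.le fun Q hQ => by
    simpa only [Polynomial.eval_mul, jacobiWeight, ← mul_assoc] using hPorth Q hQ
  exact hS ▸ trig_jacobi_matrix_det_general
    ((Polynomial.degree_eq_iff_natDegree_eq_of_pos hN).2 hPdeg) hPode hzmono.injective hzroot hzmem
end

section
/- Let N ≥ 1, a ≥ 0, b > 0, κ > 0, and set α = a+b−1 and β = b−1. Then ∫_A Π_{1≤i<j≤N}(x_j−x_i)^κ · Π_{i=1}^N (1−x_i)^{κ(a+b)/2 − 1/2}(1+x_i)^{κb/2 − 1/2} dx = (2^{κN(N+α+β+1)/2}/N!) · Π_{j=1}^N [Γ(1+jκ/2)/Γ(1+κ/2)] · [Γ(κ(β+j)/2 + 1/2)·Γ(κ(α+j)/2 + 1/2)/Γ(κ(N+α+β+j)/2 + 1)], where the integral is over the alcove A = {x ∈ ℝ^N : −1 ≤ x_1 ≤ ... ≤ x_N ≤ 1} and Γ denotes the Gamma function. -/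
open MeasureTheory Filter Real Finset Topology

/-!
Selberg's integral `S(a, b)` on the unit cube is computed by Aomoto's method. Integrating by parts
in one variable against the integrand times a product of `k` of the other variables, and
symmetrizing the resulting poles `1 / (x i - x j)`, yields a first-order recursion in `k` whose
solution expresses `S(a + 1, b) / S(a, b)` as a rational function of `a`. The Gamma product in
Selberg's formula satisfies the same difference equation; both sides are antitone in `a`, so, as in
the Bohr-Mollerup theorem, their quotient is independent of `a`, and by the symmetry
`x ↦ 1 - x` also of `b`. At `a = b = 1` the integration by parts leaves a boundary term, which is a
Selberg integral in one variable fewer; this determines the remaining constant by induction on the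
dimension. Finally the cube consists of `n!` copies of its ordered sector, and an
affine change of variables carries this sector to the alcove.
-/

/-! ### The unit interval and the unit cube -/

/-- Lebesgue measure on the open unit interval. -/
noncomputable abbrev unitIntervalMeasure : Measure ℝ := volume.restrict (Set.Ioo 0 1)

/-- Lebesgue measure on the open unit cube of `ι → ℝ`, as a product measure, so that coordinates
can be permuted and split off. -/
noncomputable abbrev unitCubeMeasure (ι : Type*) [Fintype ι] : Measure (ι → ℝ) :=
  Measure.pi fun _ ↦ unitIntervalMeasure

lemma ae_unitIntervalMeasure_mem_Ioo : ∀ᵐ t ∂unitIntervalMeasure, t ∈ Set.Ioo (0 : ℝ) 1 :=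
  ae_restrict_mem measurableSet_Ioo

lemma ae_unitCubeMeasure_mem_Ioo (ι : Type*) [Fintype ι] :
    ∀ᵐ x ∂unitCubeMeasure ι, ∀ i, x i ∈ Set.Ioo (0 : ℝ) 1 :=
  ae_all_iff.2 fun i ↦
    (Measure.quasiMeasurePreserving_eval (fun _ : ι ↦ unitIntervalMeasure) i).ae
      ae_unitIntervalMeasure_mem_Ioo

lemma abs_sub_le_one_of_mem_Ioo {s t : ℝ} (hs : s ∈ Set.Ioo (0 : ℝ) 1)
    (ht : t ∈ Set.Ioo (0 : ℝ) 1) : |s - t| ≤ 1 :=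
  (abs_sub_lt_of_nonneg_of_lt hs.1.le hs.2 ht.1.le ht.2).le

lemma one_sub_mem_Ioo {t : ℝ} (ht : t ∈ Set.Ioo (0 : ℝ) 1) : 1 - t ∈ Set.Ioo (0 : ℝ) 1 :=
  ⟨sub_pos.2 ht.2, sub_lt_self 1 ht.1⟩

lemma integrable_rpow_mul_one_sub_rpow {p q : ℝ} (hp : -1 < p) (hq : -1 < q) :
    Integrable (fun t : ℝ ↦ t ^ p * (1 - t) ^ q) unitIntervalMeasure := by
  have beta_convergent := Complex.betaIntegral_convergent
    (u := ((p + 1 : ℝ) : ℂ)) (v := ((q + 1 : ℝ) : ℂ))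
    (by rw [Complex.ofReal_re]; linarith) (by rw [Complex.ofReal_re]; linarith)
  rw [intervalIntegrable_iff_integrableOn_Ioo_of_le zero_le_one] at beta_convergent
  refine beta_convergent.norm.congr ?_
  filter_upwards [ae_unitIntervalMeasure_mem_Ioo] with t ht
  have ht' := one_sub_mem_Ioo ht
  rw [norm_mul, ← Complex.ofReal_one, ← Complex.ofReal_sub, ← Complex.ofReal_sub,
    ← Complex.ofReal_sub, Complex.norm_cpow_eq_rpow_re_of_pos ht.1,
    Complex.norm_cpow_eq_rpow_re_of_pos ht'.1]
  simp

lemma integrableOn_ball_abs_rpow {r : ℝ} (hr : -1 < r) (R : ℝ) :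
    IntegrableOn (fun s : ℝ ↦ |s| ^ r) (Metric.ball 0 R) := by
  refine integrableOn_ball_of_norm_le_rpow (C := 1) (α := -r) (by simp) ?_ ?_ ?_
  · rw [Module.finrank_self, Nat.cast_one]
    linarith
  · refine Eventually.of_forall fun s ↦ ?_
    rw [neg_neg, one_mul, Real.norm_eq_abs s, Real.norm_of_nonneg (rpow_nonneg (abs_nonneg s) r)]
  · exact (by fun_prop : Measurable fun s : ℝ ↦ |s| ^ r).aestronglyMeasurable

lemma prod_abs_sub_rpow_mem_Icc {ι : Type*} {κ : ℝ} (hκ : 0 ≤ κ) {y : ι → ℝ}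
    (hy : ∀ j, y j ∈ Set.Ioo (0 : ℝ) 1) {t : ℝ} (ht : t ∈ Set.Ioo (0 : ℝ) 1) (s : Finset ι) :
    ∏ j ∈ s, |t - y j| ^ κ ∈ Set.Icc (0 : ℝ) 1 :=
  ⟨prod_nonneg fun _ _ ↦ rpow_nonneg (abs_nonneg _) κ,
    prod_le_one (fun _ _ ↦ rpow_nonneg (abs_nonneg _) κ) fun j _ ↦
      rpow_le_one (abs_nonneg _) (abs_sub_le_one_of_mem_Ioo ht (hy j)) hκ⟩

/-! ### Integration by parts in one coordinate -/

lemma hasDerivAt_abs_sub_rpow {s t : ℝ} (hts : t ≠ s) (κ : ℝ) :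
    HasDerivAt (fun t ↦ |t - s| ^ κ) (κ * ((t - s)⁻¹ * |t - s| ^ κ)) t := by
  have hsub : t - s ≠ 0 := sub_ne_zero.2 hts
  have deriv_abs := (hasDerivAt_abs hsub).comp t ((hasDerivAt_id t).sub_const s)
  refine (deriv_abs.rpow_const (p := κ) (Or.inl (abs_ne_zero.2 hsub))).congr_deriv ?_
  change (SignType.sign (t - s) : ℝ) * 1 * κ * |t - s| ^ (κ - 1) = _
  rw [rpow_sub_one (abs_ne_zero.2 hsub)]
  rcases lt_or_gt_of_ne hsub with h | h
  · rw [abs_of_neg h, sign_neg h, SignType.coe_neg_one]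
    field_simp
  · rw [abs_of_pos h, sign_pos h, SignType.coe_one]
    field_simp

lemma ae_prod_mem_Ioo {ι : Type*} {ν : Measure (ι → ℝ)}
    (hν : ∀ᵐ y ∂ν, ∀ j, y j ∈ Set.Ioo (0 : ℝ) 1) :
    ∀ᵐ z ∂unitIntervalMeasure.prod ν,
      z.1 ∈ Set.Ioo (0 : ℝ) 1 ∧ ∀ j, z.2 j ∈ Set.Ioo (0 : ℝ) 1 :=
  (Measure.quasiMeasurePreserving_fst.ae ae_unitIntervalMeasure_mem_Ioo).and
    (Measure.quasiMeasurePreserving_snd.ae hν)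

lemma measurePreserving_sub_prod {β : Type*} [MeasurableSpace β] (ν : Measure β) [SFinite ν]
    {f : β → ℝ} (hf : Measurable f) :
    MeasurePreserving (fun z : ℝ × β ↦ (z.1 - f z.2, z.2))
      ((volume : Measure ℝ).prod ν) ((volume : Measure ℝ).prod ν) := by
  have shear : MeasurePreserving (fun z : β × ℝ ↦ (z.1, z.2 - f z.1))
      (ν.prod (volume : Measure ℝ)) (ν.prod (volume : Measure ℝ)) :=
    (MeasurePreserving.id ν).skew_product (g := fun y s ↦ s - f y) (by fun_prop)
      (Eventually.of_forall fun y ↦ (measurePreserving_sub_right volume (f y)).map_eq)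
  exact Measure.measurePreserving_swap.comp (shear.comp Measure.measurePreserving_swap)

/-- The shear `(t, y) ↦ (t - f y, y)` moves the singularity to `t = 0`, where it is integrable
uniformly in `y`. -/
lemma integrable_abs_sub_rpow_mul {β : Type*} [MeasurableSpace β] {ν : Measure β} [SFinite ν]
    {r : ℝ} (hr : -1 < r) {f : β → ℝ} (hf : Measurable f)
    (hfν : ∀ᵐ y ∂ν, f y ∈ Set.Ioo (0 : ℝ) 1) {V : β → ℝ} (hV : Integrable V ν) :
    Integrable (fun z : ℝ × β ↦ |z.1 - f z.2| ^ r * V z.2) (unitIntervalMeasure.prod ν) := by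
  have cutoff_integrable := (((integrable_indicator_iff measurableSet_ball).2
    (integrableOn_ball_abs_rpow hr 1)).mul_prod hV)
  have sheared := (measurePreserving_sub_prod ν hf).integrable_comp_of_integrable cutoff_integrable
  refine (sheared.mono_measure (Measure.prod_mono Measure.restrict_le_self le_rfl)).congr ?_
  filter_upwards [Measure.quasiMeasurePreserving_fst.ae ae_unitIntervalMeasure_mem_Ioo,
    Measure.quasiMeasurePreserving_snd.ae hfν] with z ht hy
  have hmem : z.1 - f z.2 ∈ Metric.ball (0 : ℝ) 1 := by
    rw [mem_ball_zero_iff, Real.norm_eq_abs]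
    exact abs_sub_lt_of_nonneg_of_lt ht.1.le ht.2 hy.1.le hy.2
  simp only [Function.comp_apply, Set.indicator_of_mem hmem]

section Fiber

variable {ι : Type*} [Fintype ι] {p q κ : ℝ}

/-- The Selberg weight as a function of a single coordinate `t`, the others being frozen at `y`.
Unlike the Selberg parameters, `p` and `q` are the exponents themselves. -/
noncomputable def fiberWeight (p q κ : ℝ) (y : ι → ℝ) (t : ℝ) : ℝ :=
  t ^ p * (1 - t) ^ q * ∏ j, |t - y j| ^ κ

lemma fiberWeight_sub_one_left {t : ℝ} (ht : t ≠ 0) (p q κ : ℝ) (y : ι → ℝ) :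
    t * fiberWeight (p - 1) q κ y t = fiberWeight p q κ y t := by
  rw [fiberWeight, fiberWeight, rpow_sub_one ht]
  field_simp

lemma fiberWeight_sub_one_right {t : ℝ} (ht : 1 - t ≠ 0) (p q κ : ℝ) (y : ι → ℝ) :
    (1 - t) * fiberWeight p (q - 1) κ y t = fiberWeight p q κ y t := by
  rw [fiberWeight, fiberWeight, rpow_sub_one ht]
  field_simp

lemma measurable_uncurry_fiberWeight (p q κ : ℝ) :
    Measurable fun z : ℝ × (ι → ℝ) ↦ fiberWeight p q κ z.2 z.1 := by
  unfold fiberWeight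
  fun_prop

lemma continuous_fiberWeight (hp : 0 ≤ p) (hq : 0 ≤ q) (hκ : 0 ≤ κ) (y : ι → ℝ) :
    Continuous (fiberWeight p q κ y) := by
  unfold fiberWeight
  fun_prop (disch := intros; right; assumption)

lemma hasDerivAt_prod_abs_sub_rpow (κ : ℝ) {y : ι → ℝ} {t : ℝ} (ht : t ∉ Set.range y) :
    HasDerivAt (fun t ↦ ∏ j, |t - y j| ^ κ)
      (κ * ∑ j, (t - y j)⁻¹ * ∏ j, |t - y j| ^ κ) t := by
  classical
  refine (HasDerivAt.fun_finsetProd fun j _ ↦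
    hasDerivAt_abs_sub_rpow (fun h ↦ ht ⟨j, h.symm⟩) κ).congr_deriv ?_
  rw [mul_sum]
  refine sum_congr rfl fun j hj ↦ ?_
  rw [← mul_prod_erase univ _ hj, smul_eq_mul]
  ring

lemma hasDerivAt_fiberWeight (p q κ : ℝ) {y : ι → ℝ} {t : ℝ} (ht : t ∈ Set.Ioo (0 : ℝ) 1)
    (hty : t ∉ Set.range y) :
    HasDerivAt (fiberWeight p q κ y)
      (p * fiberWeight (p - 1) q κ y t - q * fiberWeight p (q - 1) κ y t +
        κ * ∑ j, (t - y j)⁻¹ * fiberWeight p q κ y t) t := by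
  have deriv_left : HasDerivAt (fun t ↦ t ^ p) (p * t ^ (p - 1)) t :=
    hasDerivAt_rpow_const (Or.inl ht.1.ne')
  have deriv_right : HasDerivAt (fun t ↦ (1 - t) ^ q) (-(q * (1 - t) ^ (q - 1))) t := by
    simpa using ((hasDerivAt_id t).const_sub 1).rpow_const (p := q)
      (Or.inl (one_sub_mem_Ioo ht).1.ne')
  refine ((deriv_left.fun_mul deriv_right).fun_mul
    (hasDerivAt_prod_abs_sub_rpow κ hty)).congr_deriv ?_
  simp only [fiberWeight, ← sum_mul]
  ring

/-- The boundary term at `t = 1` carries the factor `0 ^ q`, which is `1` for `q = 0` and vanishes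
for `q > 0`. -/
lemma integral_deriv_fiberWeight (hp : 0 < p) (hq : 0 ≤ q) (hκ : 0 ≤ κ) (y : ι → ℝ)
    (hint : Integrable (fun t ↦ p * fiberWeight (p - 1) q κ y t - q * fiberWeight p (q - 1) κ y t +
      κ * ∑ j, (t - y j)⁻¹ * fiberWeight p q κ y t) unitIntervalMeasure) :
    ∫ t, (p * fiberWeight (p - 1) q κ y t - q * fiberWeight p (q - 1) κ y t +
      κ * ∑ j, (t - y j)⁻¹ * fiberWeight p q κ y t) ∂unitIntervalMeasure =
      0 ^ q * ∏ j, |1 - y j| ^ κ := by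
  rw [← integral_Ioc_eq_integral_Ioo, ← intervalIntegral.integral_of_le zero_le_one,
    integral_eq_of_hasDerivAt_off_countable_of_le (fiberWeight p q κ y) _ zero_le_one
      (Set.countable_range y) (continuous_fiberWeight hp.le hq hκ y).continuousOn
      (fun t ht ↦ hasDerivAt_fiberWeight p q κ ht.1 ht.2)
      ((intervalIntegrable_iff_integrableOn_Ioo_of_le zero_le_one).2 hint)]
  simp [fiberWeight, zero_rpow hp.ne']

variable {ν : Measure (ι → ℝ)} {V : (ι → ℝ) → ℝ}

lemma integrable_fiberWeight_mul [SFinite ν] (hp : -1 < p) (hq : -1 < q) (hκ : 0 ≤ κ)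
    (hν : ∀ᵐ y ∂ν, ∀ j, y j ∈ Set.Ioo (0 : ℝ) 1) (hV : Integrable V ν) :
    Integrable (fun z : ℝ × (ι → ℝ) ↦ fiberWeight p q κ z.2 z.1 * V z.2)
      (unitIntervalMeasure.prod ν) := by
  refine ((integrable_rpow_mul_one_sub_rpow hp hq).mul_prod hV).mono
    ((measurable_uncurry_fiberWeight p q κ).aestronglyMeasurable.mul hV.1.comp_snd) ?_
  filter_upwards [ae_prod_mem_Ioo hν] with z ⟨hz₁, hz₂⟩
  have hprod := prod_abs_sub_rpow_mem_Icc hκ hz₂ hz₁ univ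
  rw [fiberWeight, norm_mul, norm_mul, norm_mul _ (V z.2), Real.norm_of_nonneg hprod.1]
  exact mul_le_mul_of_nonneg_right (mul_le_of_le_one_right (norm_nonneg _) hprod.2)
    (norm_nonneg _)

lemma norm_inv_sub_mul_fiberWeight_le (hp : 0 ≤ p) (hq : 0 ≤ q) (hκ : 0 ≤ κ) {y : ι → ℝ}
    (hy : ∀ j, y j ∈ Set.Ioo (0 : ℝ) 1) {t : ℝ} (ht : t ∈ Set.Ioo (0 : ℝ) 1) (j : ι) :
    ‖(t - y j)⁻¹ * fiberWeight p q κ y t‖ ≤ |t - y j| ^ (κ - 1) := by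
  classical
  have hprod := prod_abs_sub_rpow_mem_Icc hκ hy ht (univ.erase j)
  have ht' := one_sub_mem_Ioo ht
  have hbeta : t ^ p * (1 - t) ^ q * ∏ k ∈ univ.erase j, |t - y k| ^ κ ≤ 1 :=
    mul_le_one₀ (mul_le_one₀ (rpow_le_one ht.1.le ht.2.le hp) (rpow_nonneg ht'.1.le q)
      (rpow_le_one ht'.1.le ht'.2.le hq)) hprod.1 hprod.2
  have hbeta_nonneg : 0 ≤ t ^ p * (1 - t) ^ q * ∏ k ∈ univ.erase j, |t - y k| ^ κ :=
    mul_nonneg (mul_nonneg (rpow_nonneg ht.1.le p) (rpow_nonneg ht'.1.le q)) hprod.1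
  have hsing : |t - y j|⁻¹ * |t - y j| ^ κ ≤ |t - y j| ^ (κ - 1) := by
    rcases eq_or_ne (t - y j) 0 with h | h
    · rw [h, abs_zero, inv_zero, zero_mul]
      exact rpow_nonneg le_rfl _
    · rw [rpow_sub_one (abs_ne_zero.2 h), div_eq_inv_mul]
  calc ‖(t - y j)⁻¹ * fiberWeight p q κ y t‖
      = |t - y j|⁻¹ * |t - y j| ^ κ *
          (t ^ p * (1 - t) ^ q * ∏ k ∈ univ.erase j, |t - y k| ^ κ) := by
        rw [fiberWeight, ← mul_prod_erase univ _ (mem_univ j), norm_mul, norm_inv,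
          Real.norm_eq_abs, mul_left_comm, norm_mul, Real.norm_of_nonneg hbeta_nonneg,
          Real.norm_of_nonneg (rpow_nonneg (abs_nonneg _) κ), ← mul_assoc]
    _ ≤ |t - y j|⁻¹ * |t - y j| ^ κ := mul_le_of_le_one_right
        (mul_nonneg (inv_nonneg.2 (abs_nonneg _)) (rpow_nonneg (abs_nonneg _) κ)) hbeta
    _ ≤ |t - y j| ^ (κ - 1) := hsing

lemma integrable_inv_sub_mul_fiberWeight_mul [SFinite ν] (hp : 0 ≤ p) (hq : 0 ≤ q) (hκ : 0 < κ)
    (hν : ∀ᵐ y ∂ν, ∀ j, y j ∈ Set.Ioo (0 : ℝ) 1) (hV : Integrable V ν) (j : ι) :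
    Integrable (fun z : ℝ × (ι → ℝ) ↦ (z.1 - z.2 j)⁻¹ * fiberWeight p q κ z.2 z.1 * V z.2)
      (unitIntervalMeasure.prod ν) := by
  have hdom := integrable_abs_sub_rpow_mul (r := κ - 1) (by linarith) (measurable_pi_apply j)
    (hν.mono fun y hy ↦ hy j) hV
  have hmeas : Measurable fun z : ℝ × (ι → ℝ) ↦ (z.1 - z.2 j)⁻¹ * fiberWeight p q κ z.2 z.1 :=
    (by fun_prop : Measurable fun z : ℝ × (ι → ℝ) ↦ (z.1 - z.2 j)⁻¹).mul
      (measurable_uncurry_fiberWeight p q κ)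
  refine hdom.mono (hmeas.aestronglyMeasurable.mul hV.1.comp_snd) ?_
  filter_upwards [ae_prod_mem_Ioo hν] with z ⟨hz₁, hz₂⟩
  rw [norm_mul, norm_mul _ (V z.2), Real.norm_of_nonneg (rpow_nonneg (abs_nonneg _) _)]
  exact mul_le_mul_of_nonneg_right
    (norm_inv_sub_mul_fiberWeight_le hp hq hκ.le hz₂ hz₁ j) (norm_nonneg _)

theorem integral_fiberWeight_by_parts [SFinite ν] (hp : 0 < p) (hq : 0 ≤ q) (hκ : 0 < κ)
    (hν : ∀ᵐ y ∂ν, ∀ j, y j ∈ Set.Ioo (0 : ℝ) 1) (hV : Integrable V ν) :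
    p * ∫ z, fiberWeight (p - 1) q κ z.2 z.1 * V z.2 ∂unitIntervalMeasure.prod ν -
        q * ∫ z, fiberWeight p (q - 1) κ z.2 z.1 * V z.2 ∂unitIntervalMeasure.prod ν +
        κ * ∑ j, ∫ z, (z.1 - z.2 j)⁻¹ * fiberWeight p q κ z.2 z.1 * V z.2
          ∂unitIntervalMeasure.prod ν =
      ∫ y, 0 ^ q * (∏ j, |1 - y j| ^ κ) * V y ∂ν := by
  have int_left := (integrable_fiberWeight_mul (p := p - 1) (by linarith) (by linarith : -1 < q)
    hκ.le hν hV).const_mul p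
  have int_right : Integrable (fun z ↦ q * (fiberWeight p (q - 1) κ z.2 z.1 * V z.2))
      (unitIntervalMeasure.prod ν) := by
    rcases hq.eq_or_lt with rfl | hq
    · simp
    · exact (integrable_fiberWeight_mul (by linarith) (by linarith) hκ.le hν hV).const_mul q
  have int_sing := integrable_inv_sub_mul_fiberWeight_mul hp.le hq hκ hν hV
  have int_sum := (integrable_finsetSum univ fun j _ ↦ int_sing j).const_mul κ
  rw [← integral_finsetSum univ fun j _ ↦ int_sing j, ← integral_const_mul, ← integral_const_mul,
    ← integral_const_mul, ← integral_sub int_left int_right,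
    ← integral_add (by exact int_left.sub int_right) int_sum]
  have int_total := (int_left.sub int_right).add int_sum
  refine (integral_prod_symm _ int_total).trans (integral_congr_ae ?_)
  filter_upwards [int_total.prod_left_ae] with y hy
  have factor_V (t : ℝ) :
      p * (fiberWeight (p - 1) q κ y t * V y) - q * (fiberWeight p (q - 1) κ y t * V y) +
        κ * ∑ j, (t - y j)⁻¹ * fiberWeight p q κ y t * V y =
      (p * fiberWeight (p - 1) q κ y t - q * fiberWeight p (q - 1) κ y t +
        κ * ∑ j, (t - y j)⁻¹ * fiberWeight p q κ y t) * V y := by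
    rw [← sum_mul]
    ring
  simp only [Pi.add_apply, Pi.sub_apply, factor_V] at hy ⊢
  rw [integral_mul_const]
  rcases eq_or_ne (V y) 0 with hVy | hVy
  · rw [hVy, mul_zero, mul_zero]
  · rw [integral_deriv_fiberWeight hp hq hκ.le y ((integrable_mul_const_iff hVy.isUnit _).1 hy)]

end Fiber

/-! ### Permuting and splitting off coordinates -/

section Coordinates

variable {ι α : Type*} [MeasurableSpace α]

lemma measurableEmbedding_comp_perm (σ : Equiv.Perm ι) :
    MeasurableEmbedding fun x : ι → α ↦ x ∘ σ :=
  (MeasurableEquiv.arrowCongr' σ.symm (MeasurableEquiv.refl α)).measurableEmbedding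

variable (μ : Measure α) [SigmaFinite μ]

lemma measurePreserving_comp_perm [Fintype ι] (σ : Equiv.Perm ι) :
    MeasurePreserving (fun x : ι → α ↦ x ∘ σ) (Measure.pi fun _ ↦ μ) (Measure.pi fun _ ↦ μ) :=
  measurePreserving_arrowCongr' (fun _ ↦ μ) (fun _ ↦ μ) σ.symm (MeasurableEquiv.refl α)
    fun _ ↦ MeasurePreserving.id μ

lemma integral_comp_perm [Fintype ι] (σ : Equiv.Perm ι) (f : (ι → α) → ℝ) :
    ∫ x, f (x ∘ σ) ∂Measure.pi (fun _ ↦ μ) = ∫ x, f x ∂Measure.pi fun _ ↦ μ :=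
  (measurePreserving_comp_perm μ σ).integral_comp (measurableEmbedding_comp_perm σ) f

lemma measurePreserving_insertNth {m : ℕ} (i : Fin (m + 1)) :
    MeasurePreserving (MeasurableEquiv.piFinSuccAbove (fun _ ↦ α) i).symm
      (μ.prod (Measure.pi fun _ ↦ μ)) (Measure.pi fun _ ↦ μ) :=
  (measurePreserving_piFinSuccAbove (fun _ ↦ μ) i).symm _

lemma integral_insertNth {m : ℕ} (i : Fin (m + 1)) (f : (Fin (m + 1) → α) → ℝ) :
    ∫ z : α × (Fin m → α), f (i.insertNth z.1 z.2) ∂μ.prod (Measure.pi fun _ ↦ μ) =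
      ∫ x, f x ∂Measure.pi fun _ ↦ μ :=
  (measurePreserving_insertNth μ i).integral_comp (MeasurableEquiv.measurableEmbedding _) f

lemma integrable_insertNth_iff {m : ℕ} (i : Fin (m + 1)) {f : (Fin (m + 1) → α) → ℝ} :
    Integrable (fun z : α × (Fin m → α) ↦ f (i.insertNth z.1 z.2))
      (μ.prod (Measure.pi fun _ ↦ μ)) ↔ Integrable f (Measure.pi fun _ ↦ μ) :=
  (measurePreserving_insertNth μ i).integrable_comp_emb (MeasurableEquiv.measurableEmbedding _)

variable {μ} in
lemma integral_eq_of_add_comp_perm [Fintype ι] (σ : Equiv.Perm ι) {f g : (ι → α) → ℝ}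
    (hf : Integrable f (Measure.pi fun _ ↦ μ)) (hfg : ∀ x, f x + f (x ∘ σ) = 2 * g x) :
    ∫ x, f x ∂Measure.pi (fun _ ↦ μ) = ∫ x, g x ∂Measure.pi fun _ ↦ μ := by
  have hsum := integral_add hf
    ((measurePreserving_comp_perm μ σ).integrable_comp_of_integrable hf)
  simp only [Function.comp_apply, hfg, integral_const_mul, integral_comp_perm μ σ f] at hsum
  linarith

end Coordinates

lemma prod_comp_swap {ι M : Type*} [DecidableEq ι] [CommMonoid M] {i j : ι} {T : Finset ι}
    (h : i ∈ T ↔ j ∈ T) (x : ι → M) : ∏ k ∈ T, (x ∘ Equiv.swap i j) k = ∏ k ∈ T, x k := by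
  refine prod_equiv (Equiv.swap i j) (fun k ↦ ?_) fun _ _ ↦ rfl
  rw [Equiv.swap_apply_def]
  split_ifs with hki hkj
  · rw [hki, h]
  · rw [hkj, h]
  · rfl

/-- Averaging over the transposition of `i` and `j` cancels the pole at `x i = x j`. -/
lemma integral_inv_sub_mul {ι : Type*} [Fintype ι] [DecidableEq ι] {μ : Measure ℝ} [SigmaFinite μ]
    {i j : ι} {w φ g : (ι → ℝ) → ℝ} (w_swap : ∀ x, w (x ∘ Equiv.swap i j) = w x)
    (w_eq_zero : ∀ x, x i = x j → w x = 0)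
    (φ_sub_swap : ∀ x, φ x - φ (x ∘ Equiv.swap i j) = 2 * ((x i - x j) * g x))
    (hint : Integrable (fun x ↦ (x i - x j)⁻¹ * φ x * w x) (Measure.pi fun _ ↦ μ)) :
    ∫ x, (x i - x j)⁻¹ * φ x * w x ∂Measure.pi (fun _ ↦ μ) =
      ∫ x, g x * w x ∂Measure.pi fun _ ↦ μ := by
  refine integral_eq_of_add_comp_perm (Equiv.swap i j) hint fun x ↦ ?_
  rw [w_swap, Function.comp_apply, Function.comp_apply, Equiv.swap_apply_left,
    Equiv.swap_apply_right]
  rcases eq_or_ne (x i) (x j) with hij | hij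
  · rw [w_eq_zero x hij, mul_zero, mul_zero, mul_zero, mul_zero, add_zero]
  · calc (x i - x j)⁻¹ * φ x * w x + (x j - x i)⁻¹ * φ (x ∘ Equiv.swap i j) * w x
        = (x i - x j)⁻¹ * (φ x - φ (x ∘ Equiv.swap i j)) * w x := by
          rw [← neg_sub (x i) (x j), inv_neg]
          ring
      _ = 2 * (g x * w x) := by
          rw [φ_sub_swap]
          field_simp [sub_ne_zero.2 hij]

/-! ### The Selberg weight -/

section SelbergWeight

variable {ι : Type*} [Fintype ι] {γ a b : ℝ}

/-- The factor `∏_{i < j} |x i - x j| ^ (2 * γ)`, written as a product over ordered pairs so that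
it is manifestly symmetric and makes sense for an unordered index type. -/
noncomputable def absVandermonde (γ : ℝ) (x : ι → ℝ) : ℝ :=
  ∏ p ∈ (univ : Finset ι).offDiag, |x p.1 - x p.2| ^ γ

lemma absVandermonde_nonneg (γ : ℝ) (x : ι → ℝ) : 0 ≤ absVandermonde γ x :=
  prod_nonneg fun _ _ ↦ rpow_nonneg (abs_nonneg _) γ

lemma absVandermonde_le_one (hγ : 0 ≤ γ) {x : ι → ℝ} (hx : ∀ i, x i ∈ Set.Ioo (0 : ℝ) 1) :
    absVandermonde γ x ≤ 1 :=
  prod_le_one (fun _ _ ↦ rpow_nonneg (abs_nonneg _) γ) fun p _ ↦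
    rpow_le_one (abs_nonneg _) (abs_sub_le_one_of_mem_Ioo (hx p.1) (hx p.2)) hγ

lemma absVandermonde_eq_zero (hγ : γ ≠ 0) {x : ι → ℝ} {i j : ι} (hij : i ≠ j) (h : x i = x j) :
    absVandermonde γ x = 0 :=
  prod_eq_zero (i := (i, j)) (mem_offDiag.2 ⟨mem_univ i, mem_univ j, hij⟩)
    (by rw [h, sub_self, abs_zero, zero_rpow hγ])

lemma absVandermonde_comp_perm (γ : ℝ) (σ : Equiv.Perm ι) (x : ι → ℝ) :
    absVandermonde γ (x ∘ σ) = absVandermonde γ x :=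
  prod_equiv (σ.prodCongr σ) (by simp) fun _ _ ↦ rfl

@[fun_prop]
lemma measurable_absVandermonde (γ : ℝ) : Measurable (absVandermonde (ι := ι) γ) := by
  unfold absVandermonde
  fun_prop

lemma absVandermonde_eq_prod_prod [DecidableEq ι] (γ : ℝ) (x : ι → ℝ) :
    absVandermonde γ x = ∏ i, ∏ j, if i = j then 1 else |x i - x j| ^ γ := by
  have offDiag_eq : (univ : Finset ι).offDiag = ({p | ¬ p.1 = p.2} : Finset (ι × ι)) := by
    ext
    simp
  rw [absVandermonde, offDiag_eq, prod_filter, Fintype.prod_prod_type]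
  simp only [ite_not]

lemma absVandermonde_insertNth (hγ : 0 ≤ γ) {m : ℕ} (i : Fin (m + 1)) (t : ℝ) (y : Fin m → ℝ) :
    absVandermonde γ (i.insertNth t y : Fin (m + 1) → ℝ) =
      (∏ j, |t - y j| ^ (2 * γ)) * absVandermonde γ y := by
  simp only [absVandermonde_eq_prod_prod, Fin.prod_univ_succAbove _ i, if_true,
    Fin.insertNth_apply_same, Fin.insertNth_apply_succAbove, Fin.succAbove_ne,
    (Fin.succAbove_ne _ _).symm, if_false, Fin.succAbove_right_inj, prod_mul_distrib, one_mul,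
    ← mul_assoc]
  simp only [abs_sub_comm _ t, ← prod_mul_distrib, ← rpow_add_of_nonneg (abs_nonneg _) hγ hγ,
    two_mul]

/-- The integrand of Selberg's integral on the unit cube, with `a`, `b` the parameters of the
underlying beta weight. -/
noncomputable def selbergWeight (γ a b : ℝ) (x : ι → ℝ) : ℝ :=
  (∏ i, x i ^ (a - 1) * (1 - x i) ^ (b - 1)) * absVandermonde γ x

lemma selbergWeight_comp_perm (γ a b : ℝ) (σ : Equiv.Perm ι) (x : ι → ℝ) :
    selbergWeight γ a b (x ∘ σ) = selbergWeight γ a b x := by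
  rw [selbergWeight, selbergWeight, absVandermonde_comp_perm]
  exact congrArg (· * _) (Equiv.prod_comp σ fun i ↦ x i ^ (a - 1) * (1 - x i) ^ (b - 1))

lemma selbergWeight_eq_zero (hγ : γ ≠ 0) (a b : ℝ) {x : ι → ℝ} {i j : ι} (hij : i ≠ j)
    (h : x i = x j) : selbergWeight γ a b x = 0 := by
  rw [selbergWeight, absVandermonde_eq_zero hγ hij h, mul_zero]

lemma selbergWeight_nonneg (γ a b : ℝ) {x : ι → ℝ} (hx : ∀ i, x i ∈ Set.Ioo (0 : ℝ) 1) :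
    0 ≤ selbergWeight γ a b x :=
  mul_nonneg (prod_nonneg fun i _ ↦ mul_nonneg (rpow_nonneg (hx i).1.le _)
    (rpow_nonneg (one_sub_mem_Ioo (hx i)).1.le _)) (absVandermonde_nonneg γ x)

@[fun_prop]
lemma measurable_selbergWeight (γ a b : ℝ) : Measurable (selbergWeight (ι := ι) γ a b) := by
  unfold selbergWeight
  fun_prop

lemma selbergWeight_insertNth (hγ : 0 ≤ γ) (a b : ℝ) {m : ℕ} (i : Fin (m + 1)) (t : ℝ)
    (y : Fin m → ℝ) :
    selbergWeight γ a b (i.insertNth t y : Fin (m + 1) → ℝ) =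
      fiberWeight (a - 1) (b - 1) (2 * γ) y t * selbergWeight γ a b y := by
  simp only [selbergWeight, fiberWeight, absVandermonde_insertNth hγ, Fin.prod_univ_succAbove _ i,
    Fin.insertNth_apply_same, Fin.insertNth_apply_succAbove]
  ring

lemma selbergWeight_one_sub (γ a b : ℝ) (x : ι → ℝ) :
    selbergWeight γ a b (fun i ↦ 1 - x i) = selbergWeight γ b a x := by
  simp only [selbergWeight, absVandermonde, sub_sub_cancel, sub_sub_sub_cancel_left,
    abs_sub_comm, mul_comm]

lemma prod_mul_selbergWeight (γ a b : ℝ) {x : ι → ℝ} (hx : ∀ i, x i ≠ 0) :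
    (∏ i, x i) * selbergWeight γ a b x = selbergWeight γ (a + 1) b x := by
  rw [selbergWeight, selbergWeight, ← mul_assoc, ← prod_mul_distrib]
  refine congrArg (· * _) (prod_congr rfl fun i _ ↦ ?_)
  rw [add_sub_cancel_right, ← mul_assoc, mul_comm (x i), ← rpow_add_one (hx i), sub_add_cancel]

lemma integrable_prod_mul_selbergWeight (hγ : 0 ≤ γ) (ha : 0 < a) (hb : 0 < b) (T : Finset ι) :
    Integrable (fun x ↦ (∏ k ∈ T, x k) * selbergWeight γ a b x) (unitCubeMeasure ι) := by
  have beta_integrable : Integrable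
      (fun x : ι → ℝ ↦ ∏ i, x i ^ (a - 1) * (1 - x i) ^ (b - 1)) (unitCubeMeasure ι) :=
    Integrable.fintype_prod fun _ ↦
      integrable_rpow_mul_one_sub_rpow (by linarith) (by linarith)
  refine beta_integrable.mono (by fun_prop) ?_
  filter_upwards [ae_unitCubeMeasure_mem_Ioo ι] with x hx
  rw [selbergWeight, mul_left_comm, norm_mul, norm_mul]
  refine mul_le_of_le_one_right (norm_nonneg _) (mul_le_one₀ ?_ (norm_nonneg _) ?_)
  · rw [norm_prod]
    exact prod_le_one (fun _ _ ↦ norm_nonneg _) fun k _ ↦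
      (Real.norm_of_nonneg (hx k).1.le).trans_le (hx k).2.le
  · exact (Real.norm_of_nonneg (absVandermonde_nonneg γ x)).trans_le (absVandermonde_le_one hγ hx)

lemma integrable_selbergWeight (hγ : 0 ≤ γ) (ha : 0 < a) (hb : 0 < b) :
    Integrable (selbergWeight γ a b) (unitCubeMeasure ι) := by
  simpa using integrable_prod_mul_selbergWeight hγ ha hb (∅ : Finset ι)

end SelbergWeight

/-! ### Aomoto's recursion -/

section Aomoto

variable {γ a b : ℝ}

/-- The integral of a squarefree monomial against the Selberg weight. -/
noncomputable def selbergMoment {ι : Type*} [Fintype ι] (γ a b : ℝ) (T : Finset ι) : ℝ :=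
  ∫ x, (∏ k ∈ T, x k) * selbergWeight γ a b x ∂unitCubeMeasure ι

/-- The summand with a pole along `x i = x j` that arises on differentiating, in the coordinate
`x i`, the monomial of `insert i T` times `1 - x i` times the Selberg weight. -/
noncomputable def aomotoPole {ι : Type*} [Fintype ι] [DecidableEq ι] (γ a b : ℝ) (T : Finset ι)
    (i j : ι) (x : ι → ℝ) : ℝ :=
  (x i - x j)⁻¹ * ((1 - x i) * ∏ k ∈ insert i T, x k) * selbergWeight γ a b x

section FixedCoordinate

variable {m : ℕ} {i : Fin (m + 1)} {T : Finset (Fin (m + 1))}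

lemma prod_insertNth (hi : i ∉ T) (t : ℝ) (y : Fin m → ℝ) :
    ∏ k ∈ T, (i.insertNth t y : Fin (m + 1) → ℝ) k =
      ∏ k ∈ T.preimage i.succAbove i.succAbove_right_injective.injOn, y k := by
  rw [← prod_preimage i.succAbove T i.succAbove_right_injective.injOn]
  · simp only [Fin.insertNth_apply_succAbove]
  · intro k hk hk'
    rw [Fin.range_succAbove] at hk'
    exact absurd (by simpa using hk') (ne_of_mem_of_not_mem hk hi)

lemma prod_mul_selbergWeight_insertNth (hγ : 0 ≤ γ) (a b : ℝ) (hi : i ∉ T) (t : ℝ)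
    (y : Fin m → ℝ) :
    (∏ k ∈ T, (i.insertNth t y : Fin (m + 1) → ℝ) k) *
        selbergWeight γ a b (i.insertNth t y : Fin (m + 1) → ℝ) =
      fiberWeight (a - 1) (b - 1) (2 * γ) y t *
        ((∏ k ∈ T.preimage i.succAbove i.succAbove_right_injective.injOn, y k) *
          selbergWeight γ a b y) := by
  rw [prod_insertNth hi, selbergWeight_insertNth hγ]
  ring

lemma aomotoPole_insertNth (hγ : 0 ≤ γ) (a b : ℝ) (hi : i ∉ T) (j : Fin m) {t : ℝ}
    (ht : t ∈ Set.Ioo (0 : ℝ) 1) (y : Fin m → ℝ) :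
    aomotoPole γ a b T i (i.succAbove j) (i.insertNth t y) =
      (t - y j)⁻¹ * fiberWeight a b (2 * γ) y t *
        ((∏ k ∈ T.preimage i.succAbove i.succAbove_right_injective.injOn, y k) *
          selbergWeight γ a b y) := by
  rw [← fiberWeight_sub_one_left ht.1.ne', ← fiberWeight_sub_one_right (one_sub_mem_Ioo ht).1.ne',
    aomotoPole, prod_insert hi, Fin.insertNth_apply_same, Fin.insertNth_apply_succAbove]
  linear_combination (t - y j)⁻¹ * (1 - t) * t * prod_mul_selbergWeight_insertNth hγ a b hi t y

lemma integrable_aomotoPole_succAbove (hγ : 0 < γ) (ha : 0 < a) (hb : 0 < b) (hi : i ∉ T)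
    (j : Fin m) :
    Integrable (aomotoPole γ a b T i (i.succAbove j)) (unitCubeMeasure (Fin (m + 1))) := by
  rw [← integrable_insertNth_iff _ i]
  refine (integrable_inv_sub_mul_fiberWeight_mul ha.le hb.le (mul_pos two_pos hγ)
    (ae_unitCubeMeasure_mem_Ioo _) (integrable_prod_mul_selbergWeight hγ.le ha hb
      (T.preimage i.succAbove i.succAbove_right_injective.injOn)) j).congr ?_
  filter_upwards [ae_prod_mem_Ioo (ae_unitCubeMeasure_mem_Ioo _)] with z hz
  exact (aomotoPole_insertNth hγ.le a b hi j hz.1 z.2).symm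

lemma selbergMoment_by_parts (hγ : 0 < γ) (ha : 0 < a) (hb : 0 < b) (hi : i ∉ T) :
    a * (selbergMoment γ a b T - selbergMoment γ a b (insert i T)) -
        b * selbergMoment γ a b (insert i T) +
        2 * γ * ∑ j : Fin m, ∫ x, aomotoPole γ a b T i (i.succAbove j) x
          ∂unitCubeMeasure (Fin (m + 1)) = 0 := by
  have by_parts := integral_fiberWeight_by_parts ha hb.le (mul_pos two_pos hγ)
    (ae_unitCubeMeasure_mem_Ioo (Fin m)) (integrable_prod_mul_selbergWeight hγ.le ha hb
      (T.preimage i.succAbove i.succAbove_right_injective.injOn))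
  have ae_mem := ae_prod_mem_Ioo (ae_unitCubeMeasure_mem_Ioo (Fin m))
  have moment_insert := prod_mul_selbergWeight_insertNth hγ.le a b hi
  simp only [zero_rpow hb.ne', zero_mul, integral_zero] at by_parts
  convert by_parts using 4
  · rw [selbergMoment, selbergMoment, ← integral_sub
      (integrable_prod_mul_selbergWeight hγ.le ha hb _)
      (integrable_prod_mul_selbergWeight hγ.le ha hb _), ← integral_insertNth _ i]
    refine integral_congr_ae ?_
    filter_upwards [ae_mem] with z hz
    rw [prod_insert hi, Fin.insertNth_apply_same,
      ← fiberWeight_sub_one_right (one_sub_mem_Ioo hz.1).1.ne']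
    linear_combination (1 - z.1) * moment_insert z.1 z.2
  · rw [selbergMoment, ← integral_insertNth _ i]
    refine integral_congr_ae ?_
    filter_upwards [ae_mem] with z hz
    rw [prod_insert hi, Fin.insertNth_apply_same, ← fiberWeight_sub_one_left hz.1.1.ne']
    linear_combination z.1 * moment_insert z.1 z.2
  · rw [← integral_insertNth _ i]
    refine integral_congr_ae ?_
    filter_upwards [ae_mem] with z hz
    exact aomotoPole_insertNth hγ.le a b hi _ hz.1 z.2

end FixedCoordinate

section Symmetrization

variable {ι : Type*} [Fintype ι] [DecidableEq ι] {T : Finset ι} {i j : ι}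

lemma selbergMoment_insert_eq (γ a b : ℝ) (hi : i ∉ T) (hj : j ∉ T) :
    selbergMoment γ a b (insert i T) = selbergMoment γ a b (insert j T) := by
  rw [selbergMoment, ← integral_comp_perm _ (Equiv.swap i j), selbergMoment]
  simp only [selbergWeight_comp_perm, prod_insert hi, prod_insert hj,
    prod_comp_swap (iff_of_false hi hj)]
  simp only [Function.comp_apply, Equiv.swap_apply_left]

lemma integral_aomotoPole_of_mem (hγ : γ ≠ 0) (hi : i ∉ T) (hj : j ∈ T)
    (hint : Integrable (aomotoPole γ a b T i j) (unitCubeMeasure ι)) :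
    ∫ x, aomotoPole γ a b T i j x ∂unitCubeMeasure ι =
      -(1 / 2) * selbergMoment γ a b (insert i T) := by
  rw [selbergMoment, ← integral_const_mul]
  simp only [aomotoPole, ← mul_assoc (-(1 / 2) : ℝ)] at hint ⊢
  refine integral_inv_sub_mul (fun x ↦ selbergWeight_comp_perm γ a b _ x)
    (fun x ↦ selbergWeight_eq_zero hγ a b (ne_of_mem_of_not_mem hj hi).symm) (fun x ↦ ?_) hint
  rw [prod_comp_swap (iff_of_true (mem_insert_self i T) (mem_insert_of_mem hj)),
    Function.comp_apply, Equiv.swap_apply_left]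
  ring

lemma integral_aomotoPole_of_notMem (hγ : 0 < γ) (ha : 0 < a) (hb : 0 < b) (hij : i ≠ j)
    (hi : i ∉ T) (hj : j ∉ T)
    (hint : Integrable (aomotoPole γ a b T i j) (unitCubeMeasure ι)) :
    ∫ x, aomotoPole γ a b T i j x ∂unitCubeMeasure ι =
      1 / 2 * selbergMoment γ a b T - selbergMoment γ a b (insert i T) := by
  have moment_integrable := integrable_prod_mul_selbergWeight (ι := ι) hγ.le ha hb
  have average : 1 / 2 * selbergMoment γ a b T - selbergMoment γ a b (insert i T) =
      ∫ x, 1 / 2 * (∏ k ∈ T, x k - ∏ k ∈ insert i T, x k - ∏ k ∈ insert j T, x k) *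
        selbergWeight γ a b x ∂unitCubeMeasure ι := by
    simp only [mul_assoc (1 / 2 : ℝ), sub_mul, integral_const_mul]
    rw [integral_sub (by exact (moment_integrable T).sub (moment_integrable _))
        (moment_integrable _),
      integral_sub (moment_integrable T) (moment_integrable _)]
    change _ = 1 / 2 * (selbergMoment γ a b T - selbergMoment γ a b (insert i T) -
      selbergMoment γ a b (insert j T))
    rw [selbergMoment_insert_eq γ a b hj hi]
    ring
  rw [average]
  refine integral_inv_sub_mul (fun x ↦ selbergWeight_comp_perm γ a b _ x)
    (fun x ↦ selbergWeight_eq_zero hγ.ne' a b hij) (fun x ↦ ?_) hint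
  rw [prod_insert hi, prod_insert hi, prod_insert hj, prod_comp_swap (iff_of_false hi hj),
    Function.comp_apply, Equiv.swap_apply_left]
  ring

end Symmetrization

variable {m : ℕ}

theorem selbergMoment_insert (hγ : 0 < γ) (ha : 0 < a) (hb : 0 < b) {i : Fin (m + 1)}
    {T : Finset (Fin (m + 1))} (hi : i ∉ T) :
    selbergMoment γ a b (insert i T) * (a + b + (2 * m - #T) * γ) =
      selbergMoment γ a b T * (a + (m - #T) * γ) := by
  set S := T.preimage i.succAbove i.succAbove_right_injective.injOn
  have card_S : #S = #T := by
    rw [card_preimage, filter_true_of_mem]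
    intro k hk
    simpa [Fin.range_succAbove] using ne_of_mem_of_not_mem hk hi
  have card_compl : (#Sᶜ : ℝ) = m - #T := by
    rw [card_compl, Nat.cast_sub (card_le_univ S), Fintype.card_fin, card_S]
  have pole_integrable := integrable_aomotoPole_succAbove hγ ha hb hi
  have by_parts := selbergMoment_by_parts hγ ha hb hi
  rw [← sum_add_sum_compl S,
    sum_eq_card_nsmul fun j hj ↦ integral_aomotoPole_of_mem hγ.ne' hi (mem_preimage.1 hj)
      (pole_integrable j),
    sum_eq_card_nsmul fun j hj ↦ integral_aomotoPole_of_notMem hγ ha hb (i.succAbove_ne j).symm hi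
      (fun h ↦ mem_compl.1 hj (mem_preimage.2 h)) (pole_integrable j),
    nsmul_eq_mul, nsmul_eq_mul, card_compl, card_S] at by_parts
  linear_combination -by_parts

/-- Selberg's integral over the unit cube in dimension `n`, with `a`, `b` the parameters of the
underlying beta integral and `2 * γ` the exponent of the Vandermonde determinant. -/
noncomputable def selbergIntegral (γ a b : ℝ) (n : ℕ) : ℝ :=
  ∫ x, selbergWeight γ a b x ∂unitCubeMeasure (Fin n)

lemma selbergMoment_empty (γ a b : ℝ) (n : ℕ) :
    selbergMoment γ a b (∅ : Finset (Fin n)) = selbergIntegral γ a b n := by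
  simp only [selbergMoment, selbergIntegral, prod_empty, one_mul]

lemma selbergMoment_univ (γ a b : ℝ) (n : ℕ) :
    selbergMoment γ a b (univ : Finset (Fin n)) = selbergIntegral γ (a + 1) b n := by
  refine integral_congr_ae ?_
  filter_upwards [ae_unitCubeMeasure_mem_Ioo (Fin n)] with x hx
  exact prod_mul_selbergWeight γ a b fun i ↦ (hx i).1.ne'

lemma selbergMoment_eq (hγ : 0 < γ) (ha : 0 < a) (hb : 0 < b) (T : Finset (Fin (m + 1))) :
    selbergMoment γ a b T = selbergIntegral γ a b (m + 1) *
      ∏ k ∈ range #T, (a + (m - k) * γ) / (a + b + (2 * m - k) * γ) := by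
  induction T using Finset.induction_on with
  | empty => rw [selbergMoment_empty, card_empty, range_zero, prod_empty, mul_one]
  | insert i T hi ih =>
    have hcard : (#T : ℝ) ≤ m := by
      exact_mod_cast Nat.lt_succ_iff.1 (by simpa using card_lt_univ_of_notMem hi)
    have hden : 0 < a + b + (2 * m - #T) * γ := by nlinarith
    rw [card_insert_of_notMem hi, prod_range_succ, ← mul_assoc, ← ih, mul_div_assoc',
      eq_div_iff hden.ne', selbergMoment_insert hγ ha hb hi]

theorem selbergIntegral_add_one_left (hγ : 0 < γ) (ha : 0 < a) (hb : 0 < b) (n : ℕ) :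
    selbergIntegral γ (a + 1) b n = selbergIntegral γ a b n *
      ∏ k ∈ range n, (a + k * γ) / (a + k * γ + (b + (n - 1) * γ)) := by
  rw [← selbergMoment_univ]
  cases n with
  | zero => simp [univ_eq_empty, selbergMoment_empty]
  | succ m =>
    rw [selbergMoment_eq hγ ha hb, card_univ, Fintype.card_fin, ← prod_range_reflect]
    refine congrArg _ (prod_congr rfl fun k hk ↦ ?_)
    have cast_reflect : ((m + 1 - 1 - k : ℕ) : ℝ) = m - k := by
      rw [Nat.add_sub_cancel, Nat.cast_sub (Nat.lt_succ_iff.1 (mem_range.1 hk))]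
    rw [cast_reflect, Nat.cast_succ]
    congr 1 <;> ring

end Aomoto

/-! ### Further relations for the Selberg integral -/

section SelbergIntegral

variable {γ a b : ℝ}

lemma selbergIntegral_zero (γ a b : ℝ) : selbergIntegral γ a b 0 = 1 := by
  simp [selbergIntegral, selbergWeight, absVandermonde, measureReal_def]

lemma selbergIntegral_nonneg (γ a b : ℝ) (n : ℕ) : 0 ≤ selbergIntegral γ a b n :=
  integral_nonneg_of_ae <|
    (ae_unitCubeMeasure_mem_Ioo (Fin n)).mono fun _ hx ↦ selbergWeight_nonneg γ a b hx

lemma measurePreserving_one_sub_unitIntervalMeasure :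
    MeasurePreserving (fun t : ℝ ↦ 1 - t) unitIntervalMeasure unitIntervalMeasure := by
  have h := (Measure.measurePreserving_sub_left (volume : Measure ℝ) 1).restrict_preimage
    (measurableSet_Ioo (a := (0 : ℝ)) (b := 1))
  rwa [Set.preimage_const_sub_Ioo, sub_self, sub_zero] at h

lemma selbergIntegral_comm (γ a b : ℝ) (n : ℕ) :
    selbergIntegral γ a b n = selbergIntegral γ b a n := by
  have reflect := measurePreserving_pi (fun _ : Fin n ↦ unitIntervalMeasure) _
    fun _ ↦ measurePreserving_one_sub_unitIntervalMeasure
  rw [selbergIntegral, ← reflect.integral_comp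
    (MeasurableEquiv.piCongrRight fun _ ↦ MeasurableEquiv.subLeft (1 : ℝ)).measurableEmbedding]
  simp only [selbergWeight_one_sub, selbergIntegral]

lemma selbergIntegral_antitoneOn (hγ : 0 ≤ γ) (hb : 0 < b) (n : ℕ) :
    AntitoneOn (fun a ↦ selbergIntegral γ a b n) (Set.Ioi 0) := by
  intro a ha a' ha' haa'
  refine integral_mono_ae (integrable_selbergWeight hγ ha' hb)
    (integrable_selbergWeight hγ ha hb) ?_
  filter_upwards [ae_unitCubeMeasure_mem_Ioo (Fin n)] with x hx
  have hx' (i : Fin n) : 0 ≤ (1 - x i) ^ (b - 1) := rpow_nonneg (one_sub_mem_Ioo (hx i)).1.le _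
  refine mul_le_mul_of_nonneg_right ?_ (absVandermonde_nonneg γ x)
  refine prod_le_prod (fun i _ ↦ mul_nonneg (rpow_nonneg (hx i).1.le _) (hx' i)) fun i _ ↦ ?_
  exact mul_le_mul_of_nonneg_right
    (rpow_le_rpow_of_exponent_ge (hx i).1 (hx i).2.le (by linarith)) (hx' i)

lemma integral_inv_sub_mul_selbergWeight_one_one (hγ : 0 < γ) {m : ℕ} (j : Fin m) :
    ∫ z, (z.1 - z.2 j)⁻¹ * fiberWeight 1 0 (2 * γ) z.2 z.1 * selbergWeight γ 1 1 z.2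
        ∂unitIntervalMeasure.prod (unitCubeMeasure (Fin m)) =
      1 / 2 * selbergIntegral γ 1 1 (m + 1) := by
  let pole (x : Fin (m + 1) → ℝ) : ℝ :=
    (x 0 - x (Fin.succAbove 0 j))⁻¹ * x 0 * selbergWeight γ 1 1 x
  have pole_insertNth : (fun z : ℝ × (Fin m → ℝ) ↦ pole (Fin.insertNth 0 z.1 z.2)) =ᵐ[
      unitIntervalMeasure.prod (unitCubeMeasure (Fin m))] fun z ↦
      (z.1 - z.2 j)⁻¹ * fiberWeight 1 0 (2 * γ) z.2 z.1 * selbergWeight γ 1 1 z.2 := by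
    filter_upwards [ae_prod_mem_Ioo (ae_unitCubeMeasure_mem_Ioo (Fin m))] with z hz
    simp only [pole, selbergWeight_insertNth hγ.le, ← fiberWeight_sub_one_left hz.1.1.ne' 1,
      Fin.insertNth_apply_same, Fin.insertNth_apply_succAbove, sub_self]
    ring
  have pole_integrable : Integrable pole (unitCubeMeasure (Fin (m + 1))) :=
    (integrable_insertNth_iff _ 0).1 <|
      (integrable_inv_sub_mul_fiberWeight_mul zero_le_one le_rfl (mul_pos two_pos hγ)
        (ae_unitCubeMeasure_mem_Ioo _)
        (integrable_selbergWeight hγ.le one_pos one_pos) j).congr pole_insertNth.symm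
  rw [← integral_congr_ae pole_insertNth, integral_insertNth, selbergIntegral,
    ← integral_const_mul]
  refine integral_inv_sub_mul (fun x ↦ selbergWeight_comp_perm γ 1 1 _ x)
    (fun x ↦ selbergWeight_eq_zero hγ.ne' 1 1 (Fin.succAbove_ne 0 j).symm) (fun x ↦ ?_)
    pole_integrable
  rw [Function.comp_apply, Equiv.swap_apply_left]
  ring

lemma prod_abs_one_sub_rpow_mul_selbergWeight (γ κ a b : ℝ) {ι : Type*} [Fintype ι] {x : ι → ℝ}
    (hx : ∀ i, x i ∈ Set.Ioo (0 : ℝ) 1) :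
    (∏ i, |1 - x i| ^ κ) * selbergWeight γ a b x = selbergWeight γ a (κ + b) x := by
  rw [selbergWeight, selbergWeight, ← mul_assoc, ← prod_mul_distrib]
  refine congrArg (· * _) (prod_congr rfl fun i _ ↦ ?_)
  have hxi := (one_sub_mem_Ioo (hx i)).1
  rw [abs_of_pos hxi, mul_left_comm, ← rpow_add hxi, add_sub_assoc]

/-- Integrating the derivative in `x 0` of `x 0` times the weight at `a = b = 1`, the boundary
term at `x 0 = 1` is a Selberg integral in one dimension less. -/
theorem selbergIntegral_succ_one_one (hγ : 0 < γ) (m : ℕ) :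
    selbergIntegral γ 1 1 (m + 1) * (1 + m * γ) = selbergIntegral γ 1 (2 * γ + 1) m := by
  have by_parts := integral_fiberWeight_by_parts one_pos le_rfl (mul_pos two_pos hγ)
    (ae_unitCubeMeasure_mem_Ioo (Fin m)) (integrable_selbergWeight hγ.le one_pos one_pos)
  have bulk : ∫ z, fiberWeight (1 - 1) 0 (2 * γ) z.2 z.1 * selbergWeight γ 1 1 z.2
      ∂unitIntervalMeasure.prod (unitCubeMeasure (Fin m)) = selbergIntegral γ 1 1 (m + 1) := by
    rw [selbergIntegral, ← integral_insertNth _ 0]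
    simp only [selbergWeight_insertNth hγ.le, sub_self]
  have boundary : ∫ y, 0 ^ (0 : ℝ) * (∏ j, |1 - y j| ^ (2 * γ)) * selbergWeight γ 1 1 y
      ∂unitCubeMeasure (Fin m) = selbergIntegral γ 1 (2 * γ + 1) m := by
    refine integral_congr_ae ?_
    filter_upwards [ae_unitCubeMeasure_mem_Ioo (Fin m)] with y hy
    rw [rpow_zero, one_mul, prod_abs_one_sub_rpow_mul_selbergWeight γ (2 * γ) 1 1 hy]
  simp only [integral_inv_sub_mul_selbergWeight_one_one hγ, bulk, boundary, sum_const, card_univ,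
    Fintype.card_fin, nsmul_eq_mul] at by_parts
  linear_combination by_parts

end SelbergIntegral

/-! ### Antitone solutions of a first-order difference equation -/

section DifferenceEquation

variable {f g R : ℝ → ℝ}

lemma div_add_natCast_eq (hg : ∀ x > 0, g x ≠ 0) (hf_add : ∀ x > 0, f (x + 1) = f x * R x)
    (hg_add : ∀ x > 0, g (x + 1) = g x * R x) {x : ℝ} (hx : 0 < x) (n : ℕ) :
    f (x + n) / g (x + n) = f x / g x := by
  induction n with
  | zero => simp
  | succ n ih =>
    have hxn : 0 < x + n := by positivity
    have hR : R (x + n) ≠ 0 := right_ne_zero_of_mul (hg_add _ hxn ▸ hg _ (by positivity))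
    rw [Nat.cast_succ, ← add_assoc, hf_add _ hxn, hg_add _ hxn, mul_div_mul_right _ _ hR, ih]

lemma tendsto_add_natCast_div (hg : ∀ x > 0, g x ≠ 0) (hg_add : ∀ x > 0, g (x + 1) = g x * R x)
    (hR : Tendsto R atTop (𝓝 1)) {x : ℝ} (hx : 0 < x) (k : ℕ) :
    Tendsto (fun n : ℕ ↦ g (x + n + k) / g (x + n)) atTop (𝓝 1) := by
  induction k with
  | zero =>
    refine tendsto_const_nhds.congr fun n ↦ ?_
    rw [Nat.cast_zero, add_zero, div_self (hg _ (by positivity))]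
  | succ k ih =>
    have shift_atTop : Tendsto (fun n : ℕ ↦ x + n + k) atTop atTop :=
      tendsto_atTop_add_const_right _ _
        (tendsto_atTop_add_const_left _ _ tendsto_natCast_atTop_atTop)
    have hlim := ih.mul (hR.comp shift_atTop)
    rw [mul_one] at hlim
    refine hlim.congr fun n ↦ ?_
    rw [Function.comp_apply, Nat.cast_succ, ← add_assoc, hg_add _ (by positivity),
      div_mul_eq_mul_div]

/-- The quotient is `1`-periodic, so it may be compared far out, where monotonicity pinches it
because `g` barely changes over bounded distances. -/
theorem div_eq_div_of_antitoneOn (hf : ∀ x > 0, 0 ≤ f x) (hg : ∀ x > 0, 0 < g x)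
    (hf_anti : AntitoneOn f (Set.Ioi 0)) (hg_anti : AntitoneOn g (Set.Ioi 0))
    (hf_add : ∀ x > 0, f (x + 1) = f x * R x) (hg_add : ∀ x > 0, g (x + 1) = g x * R x)
    (hR : Tendsto R atTop (𝓝 1)) {x y : ℝ} (hx : 0 < x) (hy : 0 < y) :
    f x / g x = f y / g y := by
  have hg₀ (x : ℝ) (hx : x > 0) : g x ≠ 0 := (hg x hx).ne'
  suffices h : ∀ x > 0, ∀ y > 0, f y / g y ≤ f x / g x from (h y hy x hx).antisymm (h x hx y hy)
  intro x hx y hy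
  obtain ⟨l, hl⟩ := exists_nat_ge (x - y)
  obtain ⟨k, hk⟩ := exists_nat_ge (y + l - x)
  have hlim := ((tendsto_add_natCast_div hg₀ hg_add hR hx k).inv₀ one_ne_zero).const_mul (f x / g x)
  rw [inv_one, mul_one] at hlim
  refine ge_of_tendsto' hlim fun n ↦ ?_
  have hxn : 0 < x + n := by positivity
  calc f y / g y = f (y + l + n) / g (y + l + n) := by
        rw [add_assoc, ← Nat.cast_add, div_add_natCast_eq hg₀ hf_add hg_add hy]
    _ ≤ f (x + n) / g (x + n + k) :=
        div_le_div₀ (hf _ hxn) (hf_anti hxn (by positivity : 0 < y + l + n) (by linarith))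
          (hg _ (by positivity)) (hg_anti (by positivity : 0 < y + l + n)
            (by positivity : 0 < x + n + k) (by linarith))
    _ = f x / g x * (g (x + n + k) / g (x + n))⁻¹ := by
        rw [← div_add_natCast_eq hg₀ hf_add hg_add hx n, inv_div,
          div_mul_div_cancel₀ (hg₀ _ hxn)]

end DifferenceEquation

lemma antitoneOn_Gamma_div_Gamma_add {c : ℝ} (hc : 0 < c) :
    AntitoneOn (fun x ↦ Gamma x / Gamma (x + c)) (Set.Ioi 0) := by
  intro x hx y hy hxy
  have hxc : x + c ∈ Set.Ioi 0 := add_pos hx hc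
  have hyc : y + c ∈ Set.Ioi 0 := add_pos hy hc
  have secant_left := convexOn_log_Gamma.secant_mono hx hxc hyc (by linarith) (by linarith)
    (by linarith : x + c ≤ y + c)
  have secant_right := convexOn_log_Gamma.secant_mono hyc hx hy (by linarith) (by linarith) hxy
  rw [add_sub_cancel_left] at secant_left
  rw [← neg_div_neg_eq, neg_sub, neg_sub, ← neg_div_neg_eq (_ - _) (y - _), neg_sub, neg_sub,
    add_sub_cancel_left] at secant_right
  have log_le := (div_le_div_iff_of_pos_right hc).1 (secant_left.trans secant_right)
  simp only [Function.comp_apply] at log_le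
  rw [← log_div (Gamma_pos_of_pos hxc).ne' (Gamma_pos_of_pos hx).ne',
    ← log_div (Gamma_pos_of_pos hyc).ne' (Gamma_pos_of_pos hy).ne',
    log_le_log_iff (div_pos (Gamma_pos_of_pos hxc) (Gamma_pos_of_pos hx))
      (div_pos (Gamma_pos_of_pos hyc) (Gamma_pos_of_pos hy))] at log_le
  simpa only [inv_div] using
    inv_anti₀ (div_pos (Gamma_pos_of_pos hxc) (Gamma_pos_of_pos hx)) log_le

/-! ### Selberg's formula -/

section SelbergFormula

variable {γ a b : ℝ}

lemma tendsto_add_div_add_add_atTop (s c : ℝ) :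
    Tendsto (fun a : ℝ ↦ (a + s) / (a + s + c)) atTop (𝓝 1) := by
  have den_atTop : Tendsto (fun a : ℝ ↦ a + s + c) atTop atTop :=
    tendsto_atTop_add_const_right _ _ (tendsto_atTop_add_const_right _ _ tendsto_id)
  have hlim := (den_atTop.inv_tendsto_atTop.const_mul c).const_sub 1
  rw [mul_zero, sub_zero] at hlim
  refine hlim.congr' ?_
  filter_upwards [den_atTop.eventually_ne_atTop 0] with a ha
  rw [Pi.inv_apply]
  field_simp
  ring

/-- The product of Gamma values which carries the dependence of Selberg's integral on `a` and
`b`. The term `n - 1` is a real subtraction, so the formula makes sense for `n = 0`. -/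
noncomputable def selbergGamma (γ a b : ℝ) (n : ℕ) : ℝ :=
  ∏ j ∈ range n, Gamma (a + j * γ) * Gamma (b + j * γ) / Gamma (a + j * γ + (b + (n - 1) * γ))

lemma selbergGamma_comm (γ a b : ℝ) (n : ℕ) : selbergGamma γ a b n = selbergGamma γ b a n := by
  refine prod_congr rfl fun j _ ↦ ?_
  rw [mul_comm]
  congr 2
  ring

lemma natCast_sub_one_mul_nonneg {n j : ℕ} (hj : j ∈ range n) (hγ : 0 ≤ γ) :
    0 ≤ ((n : ℝ) - 1) * γ :=
  mul_nonneg (sub_nonneg.2 (by exact_mod_cast Nat.one_le_of_lt (mem_range.1 hj))) hγ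

lemma selbergGamma_factor_pos (hγ : 0 ≤ γ) (ha : 0 < a) (hb : 0 < b) {n j : ℕ}
    (hj : j ∈ range n) :
    0 < Gamma (a + j * γ) * Gamma (b + j * γ) / Gamma (a + j * γ + (b + (n - 1) * γ)) := by
  have hc := natCast_sub_one_mul_nonneg hj hγ
  exact div_pos (mul_pos (Gamma_pos_of_pos (by positivity)) (Gamma_pos_of_pos (by positivity)))
    (Gamma_pos_of_pos (by positivity))

lemma selbergGamma_pos (hγ : 0 ≤ γ) (ha : 0 < a) (hb : 0 < b) (n : ℕ) :
    0 < selbergGamma γ a b n :=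
  prod_pos fun _ hj ↦ selbergGamma_factor_pos hγ ha hb hj

lemma selbergGamma_antitoneOn (hγ : 0 ≤ γ) (hb : 0 < b) (n : ℕ) :
    AntitoneOn (fun a ↦ selbergGamma γ a b n) (Set.Ioi 0) := by
  intro a ha a' ha' haa'
  rw [Set.mem_Ioi] at ha ha'
  refine prod_le_prod (fun j hj ↦ (selbergGamma_factor_pos hγ ha' hb hj).le) fun j hj ↦ ?_
  have hc := add_pos_of_pos_of_nonneg hb (natCast_sub_one_mul_nonneg hj hγ)
  rw [mul_div_right_comm, mul_div_right_comm]
  refine mul_le_mul_of_nonneg_right ?_ (Gamma_pos_of_pos (by positivity)).le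
  exact antitoneOn_Gamma_div_Gamma_add hc (by positivity : 0 < a + j * γ)
    (by positivity : 0 < a' + j * γ) (by gcongr)

lemma selbergGamma_add_one_left (hγ : 0 ≤ γ) (ha : 0 < a) (hb : 0 < b) (n : ℕ) :
    selbergGamma γ (a + 1) b n = selbergGamma γ a b n *
      ∏ j ∈ range n, (a + j * γ) / (a + j * γ + (b + (n - 1) * γ)) := by
  rw [selbergGamma, selbergGamma, ← prod_mul_distrib]
  refine prod_congr rfl fun j hj ↦ ?_
  have hc := natCast_sub_one_mul_nonneg hj hγ
  have hnum : 0 < a + j * γ := by positivity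
  have hden : 0 < a + j * γ + (b + (n - 1) * γ) := by positivity
  rw [add_right_comm a 1, add_right_comm _ 1, Gamma_add_one hnum.ne', Gamma_add_one hden.ne',
    div_mul_div_comm]
  ring

/-- The quotient does not depend on `a` because numerator and denominator are antitone in `a` and
satisfy the same difference equation; by symmetry it does not depend on `b` either. -/
lemma selbergIntegral_div_selbergGamma_eq (hγ : 0 < γ) (ha : 0 < a) (hb : 0 < b) (n : ℕ) :
    selbergIntegral γ a b n / selbergGamma γ a b n =
      selbergIntegral γ 1 1 n / selbergGamma γ 1 1 n := by
  have ratio_limit (b : ℝ) : Tendsto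
      (fun a ↦ ∏ j ∈ range n, (a + j * γ) / (a + j * γ + (b + (n - 1) * γ))) atTop (𝓝 1) := by
    simpa using tendsto_finsetProd (range n) fun j _ ↦
      tendsto_add_div_add_add_atTop (j * γ) (b + (n - 1) * γ)
  have constant_left {a b : ℝ} (ha : 0 < a) (hb : 0 < b) :
      selbergIntegral γ a b n / selbergGamma γ a b n =
        selbergIntegral γ 1 b n / selbergGamma γ 1 b n :=
    div_eq_div_of_antitoneOn (f := fun a ↦ selbergIntegral γ a b n)
      (g := fun a ↦ selbergGamma γ a b n) (fun a _ ↦ selbergIntegral_nonneg γ a b n)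
      (fun a ha ↦ selbergGamma_pos hγ.le ha hb n) (selbergIntegral_antitoneOn hγ.le hb n)
      (selbergGamma_antitoneOn hγ.le hb n) (fun a ha ↦ selbergIntegral_add_one_left hγ ha hb n)
      (fun a ha ↦ selbergGamma_add_one_left hγ.le ha hb n) (ratio_limit b) ha one_pos
  rw [constant_left ha hb, selbergIntegral_comm, selbergGamma_comm, constant_left hb one_pos]

lemma selbergGamma_succ_one_one (hγ : 0 ≤ γ) (n : ℕ) :
    selbergGamma γ 1 1 (n + 1) * (1 + n * γ) * Gamma (1 + (n + 1) * γ) =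
      selbergGamma γ 1 (2 * γ + 1) n * Gamma (1 + γ) := by
  have numerator_shift : (∏ j ∈ range n, Gamma (2 * γ + 1 + j * γ)) * Gamma (1 + γ) =
      (∏ j ∈ range (n + 1), Gamma (1 + j * γ)) * Gamma (1 + (n + 1) * γ) := by
    have h := prod_range_succ (fun j : ℕ ↦ Gamma (1 + j * γ)) (n + 1)
    rw [prod_range_succ', prod_range_succ'] at h
    push_cast at h
    rw [← h]
    simp only [zero_mul, add_zero, Gamma_one, mul_one, one_mul]
    exact congrArg (· * _) (prod_congr rfl fun j _ ↦ congrArg Gamma (by ring))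
  have denominator_shift :
      ∏ j ∈ range (n + 1), Gamma (1 + j * γ + (1 + ((n + 1 : ℕ) - 1) * γ)) =
      (∏ j ∈ range n, Gamma (1 + j * γ + (2 * γ + 1 + (n - 1) * γ))) *
        ((1 + n * γ) * Gamma (1 + n * γ)) := by
    rw [prod_range_succ', ← Gamma_add_one (by positivity)]
    refine congrArg₂ _ (prod_congr rfl fun j _ ↦ congrArg Gamma ?_) (congrArg Gamma ?_) <;>
    · push_cast
      ring
  have hGamma : Gamma (1 + n * γ) ≠ 0 := (Gamma_pos_of_pos (by positivity)).ne'
  simp only [selbergGamma, prod_div_distrib, prod_mul_distrib]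
  rw [div_mul_eq_mul_div _ _ (Gamma (1 + γ)), mul_assoc _ _ (Gamma (1 + γ)), numerator_shift,
    denominator_shift, prod_range_succ]
  generalize ∏ j ∈ range n, Gamma (1 + j * γ) = numerator
  field_simp

theorem selbergIntegral_eq (hγ : 0 < γ) (ha : 0 < a) (hb : 0 < b) (n : ℕ) :
    selbergIntegral γ a b n =
      (∏ j ∈ range n, Gamma (1 + (j + 1) * γ) / Gamma (1 + γ)) * selbergGamma γ a b n := by
  induction n generalizing a b with
  | zero => simp [selbergIntegral_zero, selbergGamma]
  | succ n ih =>
    suffices h : selbergIntegral γ 1 1 (n + 1) =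
        (∏ j ∈ range (n + 1), Gamma (1 + (j + 1) * γ) / Gamma (1 + γ)) *
          selbergGamma γ 1 1 (n + 1) by
      rw [← div_eq_iff (selbergGamma_pos hγ.le ha hb _).ne',
        selbergIntegral_div_selbergGamma_eq hγ ha hb, h,
        mul_div_cancel_right₀ _ (selbergGamma_pos hγ.le one_pos one_pos _).ne']
    have hGamma : Gamma (1 + γ) ≠ 0 := (Gamma_pos_of_pos (by positivity)).ne'
    have hfactor : 1 + n * γ ≠ 0 := by positivity
    rw [← mul_left_inj' hfactor, selbergIntegral_succ_one_one hγ, ih one_pos (by positivity),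
      prod_range_succ, eq_div_of_mul_eq hGamma (selbergGamma_succ_one_one hγ.le n).symm]
    generalize ∏ j ∈ range n, Gamma (1 + (j + 1) * γ) / Gamma (1 + γ) = constant
    field_simp

end SelbergFormula

/-! ### The ordered sector -/

section OrderedSector

variable {n : ℕ}

/-- A tuple with distinct entries is sorted by exactly one permutation. -/
lemma sum_perm_indicator_monotone {α M : Type*} [LinearOrder α] [AddCommMonoid M]
    {f : (Fin n → α) → M} (f_comp_perm : ∀ (σ : Equiv.Perm (Fin n)) x, f (x ∘ σ) = f x)
    (f_eq_zero : ∀ x, ¬ Function.Injective x → f x = 0) (x : Fin n → α) :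
    ∑ σ : Equiv.Perm (Fin n), {x | Monotone x}.indicator f (x ∘ σ) = f x := by
  by_cases hx : Function.Injective x
  · rw [sum_eq_single (Tuple.sort x), Set.indicator_of_mem (Tuple.monotone_sort x), f_comp_perm]
    · refine fun σ _ hσ ↦ Set.indicator_of_notMem (fun monotone_comp ↦ hσ ?_) f
      have comp_eq := Tuple.unique_monotone monotone_comp (Tuple.monotone_sort x)
      exact Equiv.ext fun i ↦ hx (congrFun comp_eq i)
    · exact fun h ↦ absurd (mem_univ _) h
  · rw [f_eq_zero x hx]
    refine sum_eq_zero fun σ _ ↦ Set.indicator_apply_eq_zero.2 fun _ ↦ ?_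
    rw [f_comp_perm, f_eq_zero x hx]

theorem setIntegral_monotone {μ : Measure ℝ} [SigmaFinite μ] {f : (Fin n → ℝ) → ℝ}
    (f_comp_perm : ∀ (σ : Equiv.Perm (Fin n)) x, f (x ∘ σ) = f x)
    (f_eq_zero : ∀ x, ¬ Function.Injective x → f x = 0)
    (hf : Integrable f (Measure.pi fun _ ↦ μ)) :
    ∫ x in {x | Monotone x}, f x ∂Measure.pi (fun _ ↦ μ) =
      (∫ x, f x ∂Measure.pi fun _ ↦ μ) / n.factorial := by
  have measurableSet_monotone : MeasurableSet {x : Fin n → ℝ | Monotone x} :=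
    isClosed_monotone.measurableSet
  rw [eq_div_iff (by positivity), ← integral_indicator measurableSet_monotone]
  symm
  calc ∫ x, f x ∂Measure.pi (fun _ ↦ μ)
      = ∫ x, ∑ σ : Equiv.Perm (Fin n), {x | Monotone x}.indicator f (x ∘ σ)
          ∂Measure.pi fun _ ↦ μ := by
        simp only [sum_perm_indicator_monotone f_comp_perm f_eq_zero]
    _ = ∑ σ : Equiv.Perm (Fin n), ∫ x, {x | Monotone x}.indicator f (x ∘ σ)
          ∂Measure.pi fun _ ↦ μ :=
        integral_finsetSum _ fun σ _ ↦
          (measurePreserving_comp_perm μ σ).integrable_comp_of_integrable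
            (hf.indicator measurableSet_monotone)
    _ = (∫ x, {x | Monotone x}.indicator f x ∂Measure.pi fun _ ↦ μ) * n.factorial := by
        simp only [integral_comp_perm μ _ ({x | Monotone x}.indicator f), sum_const, card_univ,
          Fintype.card_perm, Fintype.card_fin, nsmul_eq_mul, mul_comm]

/-- The alcove `l ≤ x 0 ≤ ⋯ ≤ x (n - 1) ≤ u`, the ordered part of the cube with sides `[l, u]`. -/
def alcove (n : ℕ) (l u : ℝ) : Set (Fin n → ℝ) := {x | Monotone x ∧ ∀ i, x i ∈ Set.Icc l u}

lemma alcove_eq_inter (n : ℕ) (l u : ℝ) :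
    alcove n l u = {x | Monotone x} ∩ Set.univ.pi fun _ ↦ Set.Icc l u := by
  ext
  simp only [alcove, Set.mem_ofPred_eq, Set.mem_inter_iff, Set.mem_univ_pi]

lemma measurableSet_alcove (n : ℕ) (l u : ℝ) : MeasurableSet (alcove n l u) :=
  alcove_eq_inter n l u ▸
    isClosed_monotone.measurableSet.inter (.univ_pi fun _ ↦ measurableSet_Icc)

lemma volume_restrict_alcove_zero_one (n : ℕ) :
    volume.restrict (alcove n 0 1) = (unitCubeMeasure (Fin n)).restrict {x | Monotone x} := by
  rw [alcove_eq_inter, ← Measure.restrict_restrict isClosed_monotone.measurableSet, volume_pi,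
    Measure.restrict_pi_pi, Measure.restrict_congr_set Ioo_ae_eq_Icc.symm]

lemma setIntegral_alcove_selbergWeight {γ a b : ℝ} (hγ : 0 < γ) (ha : 0 < a) (hb : 0 < b)
    (n : ℕ) :
    ∫ x in alcove n 0 1, selbergWeight γ a b x = selbergIntegral γ a b n / n.factorial := by
  rw [volume_restrict_alcove_zero_one]
  refine setIntegral_monotone (selbergWeight_comp_perm γ a b) (fun x hx ↦ ?_)
    (integrable_selbergWeight hγ.le ha hb)
  obtain ⟨i, j, hxij, hij⟩ := Function.not_injective_iff.1 hx
  exact selbergWeight_eq_zero hγ.ne' a b hij hxij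

end OrderedSector

/-! ### Affine change of variables -/

section Affine

variable {l u : ℝ}

lemma affine_mem_alcove_iff (hlu : l < u) {n : ℕ} {t : Fin n → ℝ} :
    (fun i ↦ l + (u - l) * t i) ∈ alcove n l u ↔ t ∈ alcove n 0 1 := by
  have hpos : 0 < u - l := sub_pos.2 hlu
  have mem_Icc_iff (s : ℝ) : l + (u - l) * s ∈ Set.Icc l u ↔ s ∈ Set.Icc 0 1 := by
    rw [Set.mem_Icc, Set.mem_Icc, le_add_iff_nonneg_right, mul_nonneg_iff_of_pos_left hpos,
      ← le_sub_iff_add_le', mul_le_iff_le_one_right hpos]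
  simp only [alcove, Set.mem_ofPred_eq, Monotone, add_le_add_iff_left,
    mul_le_mul_iff_right₀ hpos, mem_Icc_iff]

lemma integral_comp_affine (hlu : l < u) {n : ℕ} (f : (Fin n → ℝ) → ℝ) :
    ∫ x, f x = (u - l) ^ n * ∫ t : Fin n → ℝ, f (fun i ↦ l + (u - l) * t i) := by
  have hpos : 0 < u - l := sub_pos.2 hlu
  have scaled := Measure.integral_comp_smul (volume : Measure (Fin n → ℝ))
    (fun x ↦ f ((fun _ ↦ l) + x)) (u - l)
  rw [integral_add_left_eq_self, Module.finrank_fin_fun, smul_eq_mul,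
    abs_of_pos (by positivity)] at scaled
  calc ∫ x, f x = (u - l) ^ n * (((u - l) ^ n)⁻¹ * ∫ x, f x) := by field_simp
    _ = _ := by rw [← scaled]; rfl

lemma setIntegral_alcove (hlu : l < u) {n : ℕ} (f : (Fin n → ℝ) → ℝ) :
    ∫ x in alcove n l u, f x =
      (u - l) ^ n * ∫ t in alcove n 0 1, f (fun i ↦ l + (u - l) * t i) := by
  classical
  rw [← integral_indicator (measurableSet_alcove n l u),
    ← integral_indicator (measurableSet_alcove n 0 1), integral_comp_affine hlu]
  simp only [Set.indicator_apply, affine_mem_alcove_iff hlu]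

lemma absVandermonde_affine {ι : Type*} [Fintype ι] (γ l : ℝ) {c : ℝ} (hc : 0 ≤ c) (t : ι → ℝ) :
    absVandermonde γ (fun i ↦ l + c * t i) =
      c ^ (γ * (Fintype.card ι * (Fintype.card ι - 1))) * absVandermonde γ t := by
  have card_offDiag : (#(univ : Finset ι).offDiag : ℝ) =
      Fintype.card ι * (Fintype.card ι - 1) := by
    rw [offDiag_card, card_univ, Nat.cast_sub (Nat.le_mul_self _), Nat.cast_mul, mul_sub_one]
  simp only [absVandermonde, add_sub_add_left_eq_sub, ← mul_sub, abs_mul, abs_of_nonneg hc,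
    mul_rpow hc (abs_nonneg _), prod_mul_distrib, prod_const]
  rw [← rpow_mul_natCast hc, card_offDiag]

lemma absVandermonde_eq_of_monotone {ι : Type*} [Fintype ι] [LinearOrder ι] {γ : ℝ} (hγ : 0 ≤ γ)
    {x : ι → ℝ} (hx : Monotone x) :
    absVandermonde γ x =
      ∏ p ∈ univ.filter (fun p : ι × ι ↦ p.1 < p.2), (x p.2 - x p.1) ^ (2 * γ) := by
  have filter_lt : (univ : Finset ι).offDiag.filter (fun p ↦ p.1 < p.2) =
      univ.filter fun p : ι × ι ↦ p.1 < p.2 := by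
    ext p
    grind
  have filter_gt : (univ : Finset ι).offDiag.filter (fun p ↦ ¬ p.1 < p.2) =
      univ.filter fun p : ι × ι ↦ p.2 < p.1 := by
    ext p
    grind
  have prod_gt : ∏ p ∈ univ.filter (fun p : ι × ι ↦ p.2 < p.1), |x p.1 - x p.2| ^ γ =
      ∏ p ∈ univ.filter (fun p : ι × ι ↦ p.1 < p.2), |x p.1 - x p.2| ^ γ :=
    prod_equiv (Equiv.prodComm ι ι) (by simp) fun p _ ↦ by
      rw [Equiv.prodComm_apply, Prod.fst_swap, Prod.snd_swap, abs_sub_comm]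
  rw [absVandermonde, ← prod_filter_mul_prod_filter_not _ (fun p : ι × ι ↦ p.1 < p.2), filter_lt,
    filter_gt, prod_gt, ← prod_mul_distrib]
  refine prod_congr rfl fun p hp ↦ ?_
  rw [← rpow_add_of_nonneg (abs_nonneg _) hγ hγ, ← two_mul, abs_sub_comm,
    abs_of_nonneg (sub_nonneg.2 (hx (mem_filter.1 hp).2.le))]

lemma absVandermonde_mul_prod_affine (hlu : l < u) (γ a b : ℝ) {n : ℕ} {t : Fin n → ℝ}
    (ht : ∀ i, t i ∈ Set.Icc (0 : ℝ) 1) :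
    absVandermonde γ (fun i ↦ l + (u - l) * t i) *
        ∏ i, ((u - (l + (u - l) * t i)) ^ (b - 1) * (l + (u - l) * t i - l) ^ (a - 1)) =
      (u - l) ^ (n * (a + b - 2 + (n - 1) * γ)) * selbergWeight γ a b t := by
  have hpos : 0 < u - l := sub_pos.2 hlu
  have factor_eq (i : Fin n) :
      (u - (l + (u - l) * t i)) ^ (b - 1) * (l + (u - l) * t i - l) ^ (a - 1) =
        (u - l) ^ (a + b - 2) * (t i ^ (a - 1) * (1 - t i) ^ (b - 1)) := by
    rw [add_sub_cancel_left, ← sub_sub, ← mul_one_sub, mul_rpow hpos.le (sub_nonneg.2 (ht i).2),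
      mul_rpow hpos.le (ht i).1, show a + b - 2 = b - 1 + (a - 1) by ring, rpow_add hpos]
    ring
  have exponent_eq : n * (a + b - 2 + (n - 1) * γ) = γ * (n * (n - 1)) + (a + b - 2) * n := by
    ring
  rw [prod_congr rfl fun i _ ↦ factor_eq i, prod_mul_distrib, prod_const, card_univ,
    absVandermonde_affine γ l hpos.le, Fintype.card_fin, exponent_eq, rpow_add hpos,
    rpow_mul_natCast hpos.le, selbergWeight]
  ring

theorem setIntegral_alcove_prod_rpow {γ a b : ℝ} (hlu : l < u) (hγ : 0 < γ) (ha : 0 < a)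
    (hb : 0 < b) (n : ℕ) :
    ∫ x in alcove n l u,
        (∏ p ∈ univ.filter (fun p : Fin n × Fin n ↦ p.1 < p.2), (x p.2 - x p.1) ^ (2 * γ)) *
          ∏ i, ((u - x i) ^ (b - 1) * (x i - l) ^ (a - 1)) =
      (u - l) ^ (n * (a + b - 1 + (n - 1) * γ)) * (selbergIntegral γ a b n / n.factorial) := by
  have hpos : 0 < u - l := sub_pos.2 hlu
  rw [setIntegral_congr_fun (measurableSet_alcove n l u) fun x hx ↦ by
      rw [← absVandermonde_eq_of_monotone hγ.le hx.1], setIntegral_alcove hlu,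
    setIntegral_congr_fun (measurableSet_alcove n 0 1) fun t ht ↦
      absVandermonde_mul_prod_affine hlu γ a b ht.2,
    integral_const_mul, setIntegral_alcove_selbergWeight hγ ha hb, ← mul_assoc, ← rpow_natCast,
    ← rpow_add hpos]
  congr 2
  ring

end Affine

theorem jacobi_selberg_integral_general (N : ℕ) {α β κ : ℝ} (hκ : 0 < κ)
    (hα : -1 < κ * (α + 1)) (hβ : -1 < κ * (β + 1)) :
    ∫ x in alcove N (-1) 1,
        (∏ p ∈ univ.filter (fun p : Fin N × Fin N ↦ p.1 < p.2), (x p.2 - x p.1) ^ κ) *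
          ∏ i, ((1 - x i) ^ (κ * (α + 1) / 2 - 1 / 2) * (1 + x i) ^ (κ * (β + 1) / 2 - 1 / 2)) =
      2 ^ (κ * N * (N + α + β + 1) / 2) / N.factorial *
        ∏ j ∈ range N,
          Gamma (1 + (j + 1) * κ / 2) / Gamma (1 + κ / 2) *
            (Gamma (κ * (β + j + 1) / 2 + 1 / 2) * Gamma (κ * (α + j + 1) / 2 + 1 / 2) /
              Gamma (κ * (N + α + β + j + 1) / 2 + 1)) := by
  have hγ : 0 < κ / 2 := by positivity
  have ha : 0 < κ * (β + 1) / 2 + 1 / 2 := by linarith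
  have hb : 0 < κ * (α + 1) / 2 + 1 / 2 := by linarith
  have integral_eq := setIntegral_alcove_prod_rpow (by norm_num : (-1 : ℝ) < 1) hγ ha hb N
  rw [selbergIntegral_eq hγ ha hb, selbergGamma, ← prod_mul_distrib] at integral_eq
  convert integral_eq using 1
  · refine setIntegral_congr_fun (measurableSet_alcove N (-1) 1) fun x _ ↦ ?_
    ring_nf
  · rw [mul_div_assoc', div_mul_eq_mul_div]
    congr 3
    · norm_num
    · ring
    · ext j
      ring_nf

theorem jacobi_selberg_integral
    (N : ℕ) (hN : 1 ≤ N) (a b : ℝ) (ha : 0 ≤ a) (hb : 0 < b)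
    (α β : ℝ) (hα : α = a + b - 1) (hβ : β = b - 1)
    (κ : ℝ) (hκ : 0 < κ)
    (A : Set (Fin N → ℝ))
    (hA : A = {x | Monotone x ∧ ∀ i, x i ∈ Set.Icc (-1 : ℝ) 1})
    : (∫ x in A,
        (∏ p ∈ Finset.univ.filter (fun p : Fin N × Fin N => p.1 < p.2), (x p.2 - x p.1) ^ κ) *
          ∏ i, ((1 - x i) ^ (κ * (a + b) / 2 - 1 / 2) * (1 + x i) ^ (κ * b / 2 - 1 / 2))) =
      (2 : ℝ) ^ (κ * (N : ℝ) * ((N : ℝ) + α + β + 1) / 2) / (N.factorial : ℝ) *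
        ∏ j ∈ Finset.range N,
          Real.Gamma (1 + ((j : ℝ) + 1) * κ / 2) / Real.Gamma (1 + κ / 2) *
            (Real.Gamma (κ * (β + (j : ℝ) + 1) / 2 + 1 / 2) *
              Real.Gamma (κ * (α + (j : ℝ) + 1) / 2 + 1 / 2) /
              Real.Gamma (κ * ((N : ℝ) + α + β + (j : ℝ) + 1) / 2 + 1)) := by
  have hab : a + b = α + 1 := by linarith
  have hb' : b = β + 1 := by linarith
  rw [hA, hab, hb']
  exact jacobi_selberg_integral_general N hκ
    (by rw [← hab]; exact neg_one_lt_zero.trans_le (by positivity))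
    (by rw [← hb']; exact neg_one_lt_zero.trans_le (by positivity))
end
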